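/- arXiv:1704.03702 — 2 statements merged into one kernel-verified Lean document; each statement's English description precedes it below -/
import Mathlib

section
/- Let $K$ be a field, $P=K[X_0,\dots,X_n]$ with the standard grading, and let $\mathbb X\subseteq\mathbb P^n_K$ be a $0$-dimensional (in particular non-empty) subscheme with saturated homogeneous vanishing ideal $I_{\mathbb X}$, homogeneous coordinate ring $R=P/I_{\mathbb X}$ and set of closed points $\mathrm{Supp}(\mathbb X)=\{p_1,\dots,p_s\}$. Assume that no $p_j$ lies on the hyperplane $\mathcal Z(X_0)$, and that $\mathbb X$ is locally Gorenstein, i.e. every local ring $\mathcal O_{\mathbb X,p_j}$ is Gorenstein. Let $x_0\in R$ be the class of $X_0$, $L_0=K[x_0,x_0^{-1}]$, and $\nu_j=\dim_K\mathcal O_{\mathbb X,p_j}$. Identify the homogeneous ring of quotients $Q^h(R)$ with $\prod_{j=1}^s\mathcal O_{\mathbb X,p_j}[T_j,T_j^{-1}]$, so that $R\subseteq Q^h(R)$ via $f\mapsto(f_{p_1}T_1^i,\dots,f_{p_s}T_s^i)$ for $f\in R_i$, where $f_{p_j}$ is the germ of $f$ at $p_j$ (trivialized by $x_0^i$, so $x_0=(T_1,\dots,T_s)$).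 Let $\widetilde R=\prod_{j=1}^s\mathcal O_{\mathbb X,p_j}[T_j]\subseteq Q^h(R)$, and let $\mathfrak F_{\widetilde R/R}=\{f\in\widetilde R\mid f\widetilde R\subseteq R\}$ be the conductor. Let $\sigma$ be a homogeneous trace map of degree zero of $Q^h(R)/L_0$, i.e. $\sigma\in\mathrm{Hom}_{L_0}(Q^h(R),L_0)$ is homogeneous of degree zero and $\Sigma\colon Q^h(R)\to\mathrm{Hom}_{L_0}(Q^h(R),L_0)$, $g\mapsto g\cdot\sigma$, is bijective. Let $\mathfrak C^\sigma_{\mathbb X}\subseteq Q^h(R)$ be the Dedekind complementary module, i.e. the image of $\mathrm{Hom}_{K[x_0]}(R,K[x_0])$ under $\varphi\mapsto\Sigma^{-1}(\varphi\otimes\mathrm{id}_{L_0})$. For a subscheme $\mathbb Y\subseteq\mathbb X$ (possibly empty) let $I_{\mathbb Y}\subseteq P$ be its homogeneous ideal, $\mathrm{HF}_{\mathbb Y}(i)=\dim_K(P/I_{\mathbb Y})_i$, $I_{\mathbb Y/\mathbb X}=I_{\mathbb Y}/I_{\mathbb X}$, and $\alpha_{\mathbb Y/\mathbb X}=\min\{i\mid(I_{\mathbb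 Y/\mathbb X})_i\ne0\}$. Let $r_{\mathbb X}$ be the least $i\ge 0$ with $\mathrm{HF}_{\mathbb X}(k)=\deg(\mathbb X)=\sum_j\nu_j$ for all $k\ge i$. For each $j$ let $I_j$ be the homogeneous vanishing ideal of $\mathbb X$ at $p_j$ (generated by the homogeneous polynomials whose germ in $\mathcal O_{\mathbb X,p_j}$ is zero), and let $\mathbb Y_j$ be the subscheme of $\mathbb X$ with $I_{\mathbb Y_j}=\bigcap_{k\ne j}I_k$ (so $I_{\mathbb Y_1}=P$ if $s=1$). A maximal $p_j$-subscheme of $\mathbb X$ is a subscheme $\mathbb Y\subseteq\mathbb X$ with $\mathcal O_{\mathbb Y,p_k}=\mathcal O_{\mathbb X,p_k}$ for $k\ne j$ and $\deg(\mathbb Y)=\deg(\mathbb X)-\dim_K\kappa(p_j)$, where $\kappa(p_j)$ is the residue field at $p_j$; the kernel of $\mathcal O_{\mathbb X,p_j}\to\mathcal O_{\mathbb Y,p_j}$ is then generated by a non-zero socle element $s_j$. For $a\in\mathcal O_{\mathbb X,p_j}$ let $\mu(a)=\min\{i\in\mathbb N\mid(0,\dots,0,aT_j^i,0,\dots,0)\in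 R\}$, and let $\mu_{\mathbb Y/\mathbb X}=\max_k\mu(e_ks_j)$, where $e_1,e_2,\dots\in\mathcal O_{\mathbb X,p_j}$ are elements whose residue classes form a $K$-basis of $\kappa(p_j)$ (this number does not depend on the choices). Let $\deg_{\mathbb X}(p_j)$ be the minimum of $\mu_{\mathbb Y/\mathbb X}$ over all maximal $p_j$-subschemes $\mathbb Y$. The scheme $\mathbb X$ is a Cayley–Bacharach scheme if $\deg_{\mathbb X}(p_j)\ge r_{\mathbb X}$ for all $j$. Then Dedekind's formula $$\mathfrak F_{\widetilde R/R}\cdot\mathfrak C^\sigma_{\mathbb X}=\widetilde R$$ holds if at least one of the following conditions is satisfied: (a) $\mathbb X$ is a Cayley–Bacharach scheme; (b) for every $j\in\{1,\dots,s\}$, $\mathrm{HF}_{\mathbb Y_j}(i)=\mathrm{HF}_{\mathbb X}(i)$ for all $i<\alpha_{\mathbb Y_j/\mathbb X}$ and $\mathrm{HF}_{\mathbb Y_j}(i)=\mathrm{HF}_{\mathbb X}(i)-\nu_j$ (an equation of integers) for all $i\ge\alpha_{\mathbb Y_j/\mathbb X}$. -/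
noncomputable section

universe u

open Polynomial

attribute [local instance] MvPolynomial.gradedAlgebra

/-- A 0-dimensional subscheme `𝕏` of `ℙⁿ_K`, none of whose points lies on the hyperplane
`Z(X₀)`.  Closed subschemes of `ℙⁿ_K` are the same as saturated homogeneous ideals of
`P = K[X₀, …, Xₙ]`; `𝕏` is 0-dimensional (in particular nonempty) iff `P/I_𝕏` has
Krull dimension one. -/
structure ZeroDimSubscheme (K : Type u) [Field K] (n : ℕ) : Type u where
  /-- the homogeneous vanishing ideal `I_𝕏` -/
  I : Ideal (MvPolynomial (Fin (n + 1)) K)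
  homogeneous : I.IsHomogeneous (MvPolynomial.homogeneousSubmodule (Fin (n + 1)) K)
  saturated : ∀ (F : MvPolynomial (Fin (n + 1)) K) (k : ℕ),
    (∀ G ∈ Ideal.span (Set.range (MvPolynomial.X (R := K) (σ := Fin (n + 1)))) ^ k, G * F ∈ I) →
      F ∈ I
  dim_eq : ringKrullDim (MvPolynomial (Fin (n + 1)) K ⧸ I) = 1
  X0_notMem : ∀ p : ProjectiveSpectrum (MvPolynomial.homogeneousSubmodule (Fin (n + 1)) K),
    I ≤ p.asHomogeneousIdeal.toIdeal →
      (MvPolynomial.X 0 : MvPolynomial (Fin (n + 1)) K) ∉ p.asHomogeneousIdeal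

namespace ZeroDimSubscheme

variable {K : Type u} [Field K] {n : ℕ} (S : ZeroDimSubscheme K n)

/-! ### The homogeneous coordinate ring -/

/-- The homogeneous coordinate ring `R = P/I_𝕏`. -/
def R : Type u := MvPolynomial (Fin (n + 1)) K ⧸ S.I

instance : CommRing S.R := inferInstanceAs (CommRing (MvPolynomial (Fin (n + 1)) K ⧸ S.I))

instance : Algebra K S.R := inferInstanceAs (Algebra K (MvPolynomial (Fin (n + 1)) K ⧸ S.I))

/-- The residue class map `P → R`. -/
def mkR : MvPolynomial (Fin (n + 1)) K →ₐ[K] S.R := Ideal.Quotient.mkₐ K S.I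

/-- The element `x₀` of `R`. -/
def x0 : S.R := S.mkR (MvPolynomial.X 0)

/-- `R` as an algebra over `K[x₀]`. -/
instance : Algebra K[X] S.R := (Polynomial.aeval S.x0).toRingHom.toAlgebra

/-- The homogeneous component `R_i`. -/
def Rdeg (i : ℕ) : Submodule K S.R :=
  (MvPolynomial.homogeneousSubmodule (Fin (n + 1)) K i).map S.mkR.toLinearMap

/-! ### Points and local rings -/

/-- Since `𝕏` does not meet `Z(X₀)`, it is contained in the affine chart `X₀ ≠ 0`;
there it is `Spec A` with `A = P/(I_𝕏 + (X₀ - 1))` (dehomogenization). -/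
def A : Type u :=
  MvPolynomial (Fin (n + 1)) K ⧸ (S.I ⊔ Ideal.span {(MvPolynomial.X 0 - 1)})

instance : CommRing S.A := inferInstanceAs (CommRing
  (MvPolynomial (Fin (n + 1)) K ⧸ (S.I ⊔ Ideal.span {(MvPolynomial.X 0 - 1)})))

instance : Algebra K S.A := inferInstanceAs (Algebra K
  (MvPolynomial (Fin (n + 1)) K ⧸ (S.I ⊔ Ideal.span {(MvPolynomial.X 0 - 1)})))

/-- The residue class map `P → A`. -/
def mkA : MvPolynomial (Fin (n + 1)) K →ₐ[K] S.A := Ideal.Quotient.mkₐ K _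

/-- The support of `𝕏`, i.e. its set of closed points. -/
abbrev Supp : Type u := MaximalSpectrum S.A

/-- The local ring `𝒪_{𝕏,p}`. -/
abbrev O (p : S.Supp) : Type u := Localization.AtPrime p.asIdeal

/-- `𝕏` is locally Gorenstein: every `𝒪_{𝕏,p}` is a Gorenstein ring.  For the Artinian local
ring `𝒪_{𝕏,p}`, finite injective dimension over itself means self-injectivity. -/
def LocallyGorenstein : Prop := ∀ p : S.Supp, Module.Injective (S.O p) (S.O p)

/-- `ν_p = dim_K 𝒪_{𝕏,p}`. -/
def nu (p : S.Supp) : ℕ := Module.finrank K (S.O p)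

/-- `deg(𝕏) = ∑_p dim_K 𝒪_{𝕏,p}`. -/
def deg : ℕ := ∑ᶠ p : S.Supp, Module.finrank K (S.O p)

/-! ### The rings `R ⊆ R̃ ⊆ Q^h(R)` -/

/-- The map `P → A[T]` sending a homogeneous `F` of degree `i` to `F(1, x₁, …, xₙ) Tⁱ`. -/
def homA : MvPolynomial (Fin (n + 1)) K →ₐ[K] S.A[X] :=
  MvPolynomial.aeval fun i =>
    Polynomial.C (S.mkA (MvPolynomial.X i)) * Polynomial.X

theorem homA_of_homogeneous {F : MvPolynomial (Fin (n + 1)) K} {d : ℕ}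
    (hF : F.IsHomogeneous d) :
    S.homA F = Polynomial.C (S.mkA F) * Polynomial.X ^ d := by
  classical
  conv_lhs => rw [F.as_sum]
  conv_rhs => rw [F.as_sum]
  rw [map_sum, map_sum, map_sum, Finset.sum_mul]
  refine Finset.sum_congr rfl fun m hm => ?_
  have hd : m.sum (fun _ e => e) = d := by
    have := hF (MvPolynomial.mem_support_iff.mp hm)
    rw [Finsupp.weight_apply] at this
    simpa using this
  rw [homA, MvPolynomial.aeval_monomial, MvPolynomial.monomial_eq]
  simp only [mul_pow, map_mul, Finsupp.prod, Finset.prod_mul_distrib, map_prod, map_pow]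
  rw [Finset.prod_pow_eq_pow_sum, ← hd, Finsupp.sum, mul_assoc]
  rfl

theorem homA_eq_zero {F : MvPolynomial (Fin (n + 1)) K} (hF : F ∈ S.I) : S.homA F = 0 := by
  classical
  rw [← DirectSum.sum_support_decompose
    (MvPolynomial.homogeneousSubmodule (Fin (n + 1)) K) F, map_sum]
  refine Finset.sum_eq_zero fun d _ => ?_
  have h1 := S.homogeneous d hF
  have h2 : ((DirectSum.decompose (MvPolynomial.homogeneousSubmodule (Fin (n + 1)) K) F d :
      MvPolynomial (Fin (n + 1)) K)).IsHomogeneous d :=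
    (MvPolynomial.mem_homogeneousSubmodule _ _).mp (SetLike.coe_mem _)
  have h3 : S.mkA (DirectSum.decompose (MvPolynomial.homogeneousSubmodule (Fin (n + 1)) K) F d :
      MvPolynomial (Fin (n + 1)) K) = 0 :=
    Ideal.Quotient.eq_zero_iff_mem.mpr (Ideal.mem_sup_left h1)
  rw [S.homA_of_homogeneous h2, h3, map_zero, zero_mul]

/-- `R̃ = ∏_p 𝒪_{𝕏,p}[T_p]`. -/
def Rt : Type u := ∀ p : S.Supp, (S.O p)[X]

instance : CommRing S.Rt := inferInstanceAs (CommRing (∀ p : S.Supp, (S.O p)[X]))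

instance : Algebra K S.Rt := inferInstanceAs (Algebra K (∀ p : S.Supp, (S.O p)[X]))

/-- The germ map at `p`: `F ↦ F_p T_pⁱ` for homogeneous `F` of degree `i`, where `F_p` is the
germ of `F` at `p`. -/
def germ (p : S.Supp) : MvPolynomial (Fin (n + 1)) K →ₐ[K] (S.O p)[X] :=
  (Polynomial.mapAlgHom (IsScalarTower.toAlgHom K S.A (S.O p))).comp S.homA

/-- The map `R → R̃`, `f ↦ (f_{p_1} T_1ⁱ, …, f_{p_s} T_sⁱ)` for `f ∈ R_i`. -/
def toRt : S.R →ₐ[K] S.Rt :=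
  Ideal.Quotient.liftₐ S.I (AlgHom.pi S.germ) (by
    intro F hF
    funext p
    change S.germ p F = 0
    simp [germ, S.homA_eq_zero hF])

/-- The homogeneous ring of quotients `Q^h(R) = ∏_p 𝒪_{𝕏,p}[T_p, T_p⁻¹]`. -/
def Q : Type u := ∀ p : S.Supp, LaurentPolynomial (S.O p)

instance : CommRing S.Q := inferInstanceAs (CommRing (∀ p : S.Supp, LaurentPolynomial (S.O p)))

instance : Algebra K S.Q := inferInstanceAs (Algebra K (∀ p : S.Supp, LaurentPolynomial (S.O p)))

/-- The inclusion `R̃ ⊆ Q^h(R)`. -/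
def incl : S.Rt →+* S.Q :=
  RingHom.pi fun p => (Polynomial.toLaurent (R := S.O p)).comp (Pi.evalRingHom _ p)

/-- The injection `ĩ : R → Q^h(R)`. -/
def iota : S.R →+* S.Q := S.incl.comp S.toRt.toRingHom

instance : Algebra S.R S.Rt := S.toRt.toRingHom.toAlgebra

instance : Algebra S.R S.Q := S.iota.toAlgebra

/-- `Q^h(R)` as an algebra over `L₀ = K[x₀, x₀⁻¹]`, with `x₀ = (T_1, …, T_s)`. -/
instance : Algebra (LaurentPolynomial K) S.Q :=
  (RingHom.pi fun p => AddMonoidAlgebra.mapRingHom ℤ (algebraMap K (S.O p)) :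
    LaurentPolynomial K →+* S.Q).toAlgebra

/-- `R̃` as an `R`-submodule of `Q^h(R)`. -/
def Rtilde : Submodule S.R S.Q :=
  LinearMap.range
    ({ S.incl.toAddMonoidHom with
        map_smul' := fun r x => by
          change S.incl (S.toRt r * x) = S.incl (S.toRt r) * S.incl x
          exact map_mul _ _ _ } : S.Rt →ₗ[S.R] S.Q)

/-- The conductor `𝔉_{R̃/R} = {f ∈ R̃ | f · R̃ ⊆ R}`; here `1` is the image of `R` in `Q^h(R)`. -/
def conductor : Submodule S.R S.Q where
  carrier := {f | f ∈ S.Rtilde ∧ ∀ g ∈ S.Rtilde, f * g ∈ (1 : Submodule S.R S.Q)}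
  zero_mem' := ⟨zero_mem _, fun g _ => by rw [zero_mul]; exact zero_mem _⟩
  add_mem' := fun ha hb =>
    ⟨add_mem ha.1 hb.1, fun g hg => by rw [add_mul]; exact add_mem (ha.2 g hg) (hb.2 g hg)⟩
  smul_mem' := fun r _ ha =>
    ⟨Submodule.smul_mem _ r ha.1, fun g hg => by
      rw [smul_mul_assoc]; exact Submodule.smul_mem _ r (ha.2 g hg)⟩

/-! ### Trace maps and the Dedekind complementary module -/

/-- `q ∈ Q^h(R)_i`. -/
def IsHomogeneousOfDegree (q : S.Q) (i : ℤ) : Prop :=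
  ∀ p : S.Supp, ∃ a : S.O p, q p = LaurentPolynomial.C a * LaurentPolynomial.T i

/-- `Σ : Q^h(R) → Hom_{L₀}(Q^h(R), L₀)`, `g ↦ g · σ`, where `(g · σ)(q) = σ(g q)`. -/
def Sig (σ : S.Q →ₗ[LaurentPolynomial K] LaurentPolynomial K) (g : S.Q) :
    S.Q →ₗ[LaurentPolynomial K] LaurentPolynomial K :=
  σ ∘ₗ LinearMap.mulLeft (LaurentPolynomial K) g

/-- `σ` is a homogeneous trace map of degree zero of `Q^h(R)/L₀`: it is homogeneous of degree
zero and `{σ}` is a basis of the `Q^h(R)`-module `Hom_{L₀}(Q^h(R), L₀)`. -/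
structure IsTraceMap (σ : S.Q →ₗ[LaurentPolynomial K] LaurentPolynomial K) : Prop where
  degree_zero : ∀ (q : S.Q) (i : ℤ), S.IsHomogeneousOfDegree q i →
    ∃ c : K, σ q = LaurentPolynomial.C c * LaurentPolynomial.T i
  basis : Function.Bijective (S.Sig σ)

/-- `ψ = φ ⊗ id_{L₀}`: since `Q^h(R) = R ⊗_{K[x₀]} L₀`, this is the `L₀`-linear map
`Q^h(R) → L₀` which restricts to `φ` on `R`. -/
def IsScalarExtension (φ : S.R →ₗ[K[X]] K[X])
    (ψ : S.Q →ₗ[LaurentPolynomial K] LaurentPolynomial K) : Prop :=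
  ∀ r : S.R, ψ (S.iota r) = Polynomial.toLaurent (φ r)

theorem iota_smul (r : S.R) (x : S.R) : S.iota r * S.iota x = S.iota (r * x) :=
  (map_mul _ _ _).symm

/-- The Dedekind complementary module `𝔠^σ_𝕏 ⊆ Q^h(R)`: the image of
`ω_R(1) = Hom_{K[x₀]}(R, K[x₀])` under `φ ↦ Σ⁻¹(φ ⊗ id_{L₀})`. -/
def complementary (σ : S.Q →ₗ[LaurentPolynomial K] LaurentPolynomial K) :
    Submodule S.R S.Q where
  carrier := {g | ∃ φ : S.R →ₗ[K[X]] K[X], S.IsScalarExtension φ (S.Sig σ g)}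
  zero_mem' := ⟨0, fun r => by simp [Sig]⟩
  add_mem' := by
    rintro a b ⟨φ, hφ⟩ ⟨ψ, hψ⟩
    refine ⟨φ + ψ, fun r => ?_⟩
    have h1 := hφ r
    have h2 := hψ r
    simp only [Sig, LinearMap.comp_apply, LinearMap.mulLeft_apply] at h1 h2 ⊢
    rw [add_mul, map_add, h1, h2, LinearMap.add_apply, map_add]
  smul_mem' := by
    rintro c a ⟨φ, hφ⟩
    refine ⟨φ ∘ₗ LinearMap.mulLeft K[X] c, fun r => ?_⟩
    have h1 := hφ (c * r)
    simp only [Sig, LinearMap.comp_apply, LinearMap.mulLeft_apply] at h1 ⊢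
    rw [← h1, Algebra.smul_def, ← S.iota_smul]
    congr 1
    change S.iota c * a * S.iota r = a * (S.iota c * S.iota r)
    ring

/-! ### Hilbert functions -/

/-- The Hilbert function `i ↦ dim_K (P/J)_i` of the scheme with homogeneous ideal `J ⊆ P`. -/
def hilb (J : Ideal (MvPolynomial (Fin (n + 1)) K)) (i : ℕ) : ℕ :=
  Module.finrank K
    ((MvPolynomial.homogeneousSubmodule (Fin (n + 1)) K i).map (Ideal.Quotient.mkₐ K J).toLinearMap)

/-- `HF_𝕏`. -/
def HF (i : ℕ) : ℕ := hilb S.I i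

/-- `r_𝕏`, the least `i` with `HF_𝕏(j) = deg(𝕏)` for all `j ≥ i`. -/
def rX : ℕ := sInf {i : ℕ | ∀ j, i ≤ j → S.HF j = S.deg}

/-- The homogeneous vanishing ideal `I_p ⊆ P` of `𝕏` at `p`. -/
def vanishingIdealAt (p : S.Supp) : Ideal (MvPolynomial (Fin (n + 1)) K) :=
  RingHom.ker (S.germ p)

/-- The ideal `I_{𝕐_p} = ⋂_{q ≠ p} I_q` of the subscheme `𝕐_p`. -/
def IY (p : S.Supp) : Ideal (MvPolynomial (Fin (n + 1)) K) :=
  ⨅ (q : S.Supp) (_ : q ≠ p), S.vanishingIdealAt q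

/-- `HF_{𝕐_p}`. -/
def HFY (p : S.Supp) (i : ℕ) : ℕ := hilb (S.IY p) i

/-- `α_{𝕐_p/𝕏} = min {i | (I_{𝕐_p/𝕏})_i ≠ 0}`, where `I_{𝕐_p/𝕏}` is the image of `I_{𝕐_p}`
in `R`. -/
def alphaY (p : S.Supp) : ℕ :=
  sInf {i : ℕ | ∃ f ∈ S.Rdeg i, f ∈ (S.IY p).map S.mkR ∧ f ≠ 0}

/-! ### Separators and Cayley–Bacharach schemes -/

/-- `ϰ_p = dim_K κ(p)`, where `κ(p)` is the residue field of `𝕏` at `p`. -/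
def kappa (p : S.Supp) : ℕ := Module.finrank K (IsLocalRing.ResidueField (S.O p))

/-- The subschemes `𝕐 ⊆ 𝕏 = Spec A` are given by the ideals `J ⊆ A`, and
`𝒪_{𝕐,q} = 𝒪_{𝕏,q}/J𝒪_{𝕏,q}`.  The subscheme given by `J` is a maximal `p`-subscheme if
`𝒪_{𝕐,q} = 𝒪_{𝕏,q}` for `q ≠ p` and `deg(𝕐) = deg(𝕏) - dim_K κ(p)`. -/
structure IsMaximalSubscheme (p : S.Supp) (J : Ideal S.A) : Prop where
  eq_away : ∀ q : S.Supp, q ≠ p → J.map (algebraMap S.A (S.O q)) = ⊥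
  degree : (∑ᶠ q : S.Supp, Module.finrank K (S.O q ⧸ J.map (algebraMap S.A (S.O q)))) +
    S.kappa p = S.deg

/-- `s` is a socle element of `𝒪_{𝕏,p}` corresponding to the maximal `p`-subscheme given by `J`:
`s ∈ Ann(𝔪_{𝕏,p}) \ {0}` and `J` generates the ideal `⟨(0, …, 0, s, 0, …, 0)⟩` of
`∏_q 𝒪_{𝕏,q}`. -/
structure IsSocleElementOf (p : S.Supp) (J : Ideal S.A) (s : S.O p) : Prop where
  ne_zero : s ≠ 0
  socle : ∀ b ∈ IsLocalRing.maximalIdeal (S.O p), s * b = 0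
  span_eq : J.map (algebraMap S.A (S.O p)) = Ideal.span {s}

open Classical in
/-- `μ(a) = min {i ∈ ℕ | (0, …, 0, a T_pⁱ, 0, …, 0) ∈ ĩ(R)}` for `a ∈ 𝒪_{𝕏,p}`. -/
def mu (p : S.Supp) (a : S.O p) : ℕ :=
  sInf {i : ℕ | (Pi.single p (LaurentPolynomial.C a * LaurentPolynomial.T (i : ℤ)) : S.Q) ∈
    Set.range S.iota}

/-- The residue classes of `e₁, …, e_ϰ ∈ 𝒪_{𝕏,p}` form a `K`-basis of `κ(p)`. -/
def IsResidueBasis (p : S.Supp) (e : Fin (S.kappa p) → S.O p) : Prop :=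
  LinearIndependent K (fun k => IsLocalRing.residue (S.O p) (e k)) ∧
    Submodule.span K (Set.range fun k => IsLocalRing.residue (S.O p) (e k)) = ⊤

/-- The maximal degree `max_k μ(e_k s)` of a minimal separator with respect to the socle element
`s` and the elements `e₁, …, e_ϰ`. -/
def maxSepDegree (p : S.Supp) (s : S.O p) (e : Fin (S.kappa p) → S.O p) : ℕ :=
  Finset.univ.sup fun k => S.mu p (e k * s)

/-- `m = μ_{𝕐/𝕏}` for the maximal `p`-subscheme `𝕐` given by `J`: `m` is the maximal degree of a
minimal separator of `𝕐` in `𝕏` with respect to some choice of `s` and `e₁, …, e_ϰ`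
(the value does not depend on that choice). -/
def IsMuY (p : S.Supp) (J : Ideal S.A) (m : ℕ) : Prop :=
  ∃ (s : S.O p) (e : Fin (S.kappa p) → S.O p),
    S.IsSocleElementOf p J s ∧ S.IsResidueBasis p e ∧ m = S.maxSepDegree p s e

/-- `deg_𝕏(p) = min {μ_{𝕐/𝕏} | 𝕐 a maximal p-subscheme of 𝕏}`. -/
def degAt (p : S.Supp) : ℕ :=
  sInf {m : ℕ | ∃ J : Ideal S.A, S.IsMaximalSubscheme p J ∧ S.IsMuY p J m}

/-- `𝕏` is a Cayley–Bacharach scheme: `deg_𝕏(p) ≥ r_𝕏` for all points `p` of its support. -/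
def IsCayleyBacharach : Prop := ∀ p : S.Supp, S.rX ≤ S.degAt p

end ZeroDimSubscheme

end

noncomputable section

open Polynomial

attribute [local instance] MvPolynomial.gradedAlgebra

/-- The homogeneous component of degree `d + 1` of `X i * F` is `X i` times that of degree `d`. -/
theorem MvPolynomial.homogeneousComponent_succ_X_mul {σ R : Type*} [CommSemiring R] (i : σ)
    (F : MvPolynomial σ R) (d : ℕ) :
    homogeneousComponent (d + 1) (X i * F) = X i * homogeneousComponent d F := by
  classical
  ext m
  rw [coeff_homogeneousComponent, coeff_X_mul', coeff_X_mul']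
  by_cases hm : i ∈ m.support
  · have : (m - Finsupp.single i 1).degree + 1 = m.degree := by
      have h : m - Finsupp.single i 1 + Finsupp.single i 1 = m :=
        tsub_add_cancel_of_le (by
          simpa [Nat.one_le_iff_ne_zero] using hm)
      conv_rhs => rw [← h]
      simp
    rw [if_pos hm, if_pos hm, coeff_homogeneousComponent, ← this]
    simp
  · simp [hm]

theorem MvPolynomial.homogeneousComponent_zero_X_mul {σ R : Type*} [CommSemiring R] (i : σ)
    (F : MvPolynomial σ R) :
    homogeneousComponent 0 (X i * F) = 0 := by
  classical
  rw [homogeneousComponent_zero, coeff_X_mul']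
  simp

namespace ZeroDimSubscheme

variable {K : Type*} [Field K] {n : ℕ} (S : ZeroDimSubscheme K n)

theorem homogeneousComponent_mem {F : MvPolynomial (Fin (n + 1)) K} (hF : F ∈ S.I) (d : ℕ) :
    MvPolynomial.homogeneousComponent d F ∈ S.I :=
  MvPolynomial.homogeneousComponent_mem_of_mem S.homogeneous hF d

/-- Since `𝕏` does not meet `Z(X₀)`, a power of the irrelevant ideal lies in `I_𝕏 + (X₀)`. -/
theorem exists_pow_idealOfVars_le :
    ∃ N : ℕ, MvPolynomial.idealOfVars (Fin (n + 1)) K ^ N ≤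
      S.I ⊔ Ideal.span {MvPolynomial.X 0} := by
  have hJ : (S.I ⊔ Ideal.span {MvPolynomial.X 0}).IsHomogeneous
      (MvPolynomial.homogeneousSubmodule (Fin (n + 1)) K) := by
    refine S.homogeneous.sup (Ideal.homogeneous_span _ _ ?_)
    rintro x rfl
    exact ⟨1, MvPolynomial.isHomogeneous_X _ _⟩
  refine Ideal.exists_pow_le_of_le_radical_of_fg ?_ (MvPolynomial.idealOfVars_fg _ _)
  rw [hJ.radical_eq]
  refine le_sInf ?_
  rintro J ⟨hJh, hJle, hJp⟩
  have hirr : HomogeneousIdeal.irrelevant (MvPolynomial.homogeneousSubmodule (Fin (n + 1)) K) ≤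
      ⟨J, hJh⟩ := by
    by_contra hn
    refine S.X0_notMem ⟨⟨J, hJh⟩, hJp, hn⟩ (le_sup_left.trans hJle) ?_
    exact hJle (Ideal.mem_sup_right (Ideal.subset_span rfl))
  rw [Ideal.span_le]
  rintro _ ⟨i, rfl⟩
  exact hirr (HomogeneousIdeal.mem_irrelevant_of_mem _ one_pos (MvPolynomial.isHomogeneous_X _ i))

/-- `x₀` is a non-zerodivisor of `R`. -/
theorem mem_I_of_X0_mul_mem {F : MvPolynomial (Fin (n + 1)) K}
    (hF : MvPolynomial.X 0 * F ∈ S.I) : F ∈ S.I := by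
  obtain ⟨N, hN⟩ := S.exists_pow_idealOfVars_le
  refine S.saturated F N fun G hG => ?_
  obtain ⟨u, hu, v, hv, rfl⟩ := Submodule.mem_sup.mp (hN hG)
  obtain ⟨w, rfl⟩ := Ideal.mem_span_singleton'.mp hv
  rw [add_mul]
  refine add_mem (S.I.mul_mem_right _ hu) ?_
  rw [mul_assoc]
  exact S.I.mul_mem_left _ hF

theorem mem_I_of_X0_pow_mul_mem {F : MvPolynomial (Fin (n + 1)) K} (k : ℕ)
    (hF : MvPolynomial.X 0 ^ k * F ∈ S.I) : F ∈ S.I := by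
  induction k with
  | zero => simpa using hF
  | succ k ih => exact ih (S.mem_I_of_X0_mul_mem (by rwa [← mul_assoc, ← pow_succ']))

theorem mkA_X0 : S.mkA (MvPolynomial.X 0) = 1 := by
  rw [← map_one S.mkA]
  exact (Ideal.Quotient.eq.mpr (Ideal.mem_sup_right (Ideal.subset_span rfl)))

theorem mkA_eq_zero_of_mem {F : MvPolynomial (Fin (n + 1)) K} (hF : F ∈ S.I) : S.mkA F = 0 :=
  Ideal.Quotient.eq_zero_iff_mem.mpr (Ideal.mem_sup_left hF)

/-- Dehomogenization is injective on each `R_i`. -/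
theorem mem_I_of_mkA_eq_zero {F : MvPolynomial (Fin (n + 1)) K} {i : ℕ}
    (hF : F.IsHomogeneous i) (h0 : S.mkA F = 0) : F ∈ S.I := by
  obtain ⟨u, hu, w, hw, hFw⟩ := Submodule.mem_sup.mp (Ideal.Quotient.eq_zero_iff_mem.mp h0)
  obtain ⟨v, rfl⟩ := Ideal.mem_span_singleton'.mp hw
  replace hFw : F = u + MvPolynomial.X 0 * v - v := by rw [← hFw]; ring
  have hlow : ∀ d < i, MvPolynomial.homogeneousComponent d v ∈ S.I := by
    intro d
    induction d with
    | zero =>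
      intro hd
      have h1 := congrArg (MvPolynomial.homogeneousComponent 0) hFw
      rw [MvPolynomial.homogeneousComponent_of_mem hF, if_neg (by omega), map_sub, map_add,
        MvPolynomial.homogeneousComponent_zero_X_mul, add_zero, eq_comm, sub_eq_zero] at h1
      rw [← h1]
      exact S.homogeneousComponent_mem hu 0
    | succ d ih =>
      intro hd
      have h1 := congrArg (MvPolynomial.homogeneousComponent (d + 1)) hFw
      rw [MvPolynomial.homogeneousComponent_of_mem hF, if_neg (by omega), map_sub, map_add,
        MvPolynomial.homogeneousComponent_succ_X_mul, eq_comm, sub_eq_zero] at h1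
      rw [← h1]
      exact add_mem (S.homogeneousComponent_mem hu _) (S.I.mul_mem_left _ (ih (by omega)))
  have hhigh : ∀ k, MvPolynomial.X 0 ^ k * F + MvPolynomial.homogeneousComponent (i + k) v ∈
      S.I := by
    intro k
    induction k with
    | zero =>
      have h1 := congrArg (MvPolynomial.homogeneousComponent i) hFw
      rw [MvPolynomial.homogeneousComponent_of_mem hF, if_pos rfl, map_sub, map_add,
        eq_sub_iff_add_eq] at h1
      rw [pow_zero, one_mul, add_zero, h1]
      refine add_mem (S.homogeneousComponent_mem hu _) ?_
      rcases i with _ | i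
      · rw [MvPolynomial.homogeneousComponent_zero_X_mul]; exact zero_mem _
      · rw [MvPolynomial.homogeneousComponent_succ_X_mul]
        exact S.I.mul_mem_left _ (hlow i (by omega))
    | succ k ih =>
      have h1 := congrArg (MvPolynomial.homogeneousComponent (i + k + 1)) hFw
      rw [MvPolynomial.homogeneousComponent_of_mem hF, if_neg (by omega), map_sub, map_add,
        MvPolynomial.homogeneousComponent_succ_X_mul, eq_comm, sub_eq_zero] at h1
      rw [← add_assoc, ← h1]
      have := add_mem (S.homogeneousComponent_mem hu (i + k + 1))
        (S.I.mul_mem_left (MvPolynomial.X 0) ih)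
      convert this using 1
      ring
  have := hhigh (v.totalDegree + 1)
  rw [MvPolynomial.homogeneousComponent_eq_zero _ _ (by omega), add_zero] at this
  exact S.mem_I_of_X0_pow_mul_mem _ this

/-- The filtration of `A` by the images of the homogeneous components of `P`. -/
def filtA (i : ℕ) : Submodule K S.A :=
  (MvPolynomial.homogeneousSubmodule (Fin (n + 1)) K i).map S.mkA.toLinearMap

theorem mem_filtA {i : ℕ} {a : S.A} :
    a ∈ S.filtA i ↔ ∃ F : MvPolynomial (Fin (n + 1)) K, F.IsHomogeneous i ∧ S.mkA F = a :=
  Iff.rfl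

theorem filtA_mono : Monotone S.filtA := by
  refine monotone_nat_of_le_succ fun i => ?_
  rintro _ ⟨F, hF, rfl⟩
  refine ⟨F * MvPolynomial.X 0, ?_, ?_⟩
  · exact MvPolynomial.IsHomogeneous.mul hF (MvPolynomial.isHomogeneous_X _ _)
  · simp [S.mkA_X0]

theorem exists_mem_filtA (a : S.A) : ∃ i, a ∈ S.filtA i := by
  obtain ⟨F, rfl⟩ := Ideal.Quotient.mk_surjective a
  refine ⟨F.totalDegree, ?_⟩
  change S.mkA F ∈ _
  rw [← MvPolynomial.sum_homogeneousComponent F, map_sum]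
  refine sum_mem fun d hd => S.filtA_mono (Nat.lt_succ_iff.mp (Finset.mem_range.mp ?_))
    ⟨_, MvPolynomial.homogeneousComponent_isHomogeneous d F, rfl⟩
  simpa [MvPolynomial.sum_homogeneousComponent F] using hd

theorem exists_filtA_eq_top : ∃ N, S.filtA N = ⊤ := by
  obtain ⟨N, hN⟩ := S.exists_pow_idealOfVars_le
  have hstep : ∀ i, N ≤ i → S.filtA (i + 1) ≤ S.filtA i := by
    rintro i hi _ ⟨F, hF, rfl⟩
    replace hF : F.IsHomogeneous (i + 1) := hF
    have hFm : F ∈ MvPolynomial.idealOfVars (Fin (n + 1)) K ^ N := by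
      rw [MvPolynomial.mem_pow_idealOfVars_iff]
      intro m hm
      have := hF.degree_eq_sum_deg_support hm
      rw [Finsupp.degree_apply]
      omega
    obtain ⟨u, hu, w, hw, hFw⟩ := Submodule.mem_sup.mp (hN hFm)
    obtain ⟨v, rfl⟩ := Ideal.mem_span_singleton'.mp hw
    have h1 := congrArg (MvPolynomial.homogeneousComponent (i + 1)) hFw
    rw [MvPolynomial.homogeneousComponent_of_mem hF, if_pos rfl, map_add, mul_comm,
      MvPolynomial.homogeneousComponent_succ_X_mul] at h1
    refine ⟨_, MvPolynomial.homogeneousComponent_isHomogeneous i v, ?_⟩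
    change _ = S.mkA F
    rw [← h1, map_add, map_mul, S.mkA_X0, one_mul,
      S.mkA_eq_zero_of_mem (S.homogeneousComponent_mem hu _), zero_add]
    rfl
  have hle : ∀ i, N ≤ i → S.filtA i ≤ S.filtA N := by
    intro i hi
    induction i, hi using Nat.le_induction with
    | base => exact le_rfl
    | succ i hi ih => exact (hstep i hi).trans ih
  refine ⟨N, eq_top_iff.mpr fun a _ => ?_⟩
  obtain ⟨i, hi⟩ := S.exists_mem_filtA a
  exact hle _ (le_max_left N i) (S.filtA_mono (le_max_right N i) hi)

instance finite_homogeneousSubmodule (i : ℕ) :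
    Module.Finite K (MvPolynomial.homogeneousSubmodule (Fin (n + 1)) K i) :=
  Module.Finite.iff_fg.mpr (MvPolynomial.homogeneousSubmodule_fg _ _ i)

instance : Module.Finite K S.A := by
  obtain ⟨N, hN⟩ := S.exists_filtA_eq_top
  rw [Module.finite_def, ← hN]
  exact (MvPolynomial.homogeneousSubmodule_fg _ _ N).map _

instance : IsArtinianRing S.A := IsArtinianRing.of_finite K S.A

end ZeroDimSubscheme

namespace ZeroDimSubscheme

variable {K : Type*} [Field K] {n : ℕ} (S : ZeroDimSubscheme K n)

/-! ### The affine coordinate ring as a product of local rings -/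

instance (p : S.Supp) : Module.Finite K (S.O p) :=
  Module.Finite.of_surjective (IsScalarTower.toAlgHom K S.A (S.O p)).toLinearMap
    (IsArtinianRing.localization_surjective p.asIdeal.primeCompl (S.O p))

/-- The isomorphism `A ≅ ∏_p 𝒪_{𝕏,p}`. -/
def toProd : S.A ≃ₗ[K] ∀ p : S.Supp, S.O p :=
  LinearEquiv.ofBijective
    (AlgHom.pi fun p : S.Supp => IsScalarTower.toAlgHom K S.A (S.O p)).toLinearMap
    (MaximalSpectrum.toPiLocalizationEquiv S.A).bijective

@[simp]
theorem toProd_apply (a : S.A) (p : S.Supp) : S.toProd a p = algebraMap S.A (S.O p) a := rfl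

theorem finrank_prod : Module.finrank K (∀ p : S.Supp, S.O p) = S.deg := by
  have := Fintype.ofFinite S.Supp
  rw [Module.finrank_pi_fintype, deg, finsum_eq_sum_of_fintype]

/-- The filtration of `∏_p 𝒪_{𝕏,p}` by the germs of homogeneous polynomials of degree `i`. -/
def filt (i : ℕ) : Submodule K (∀ p : S.Supp, S.O p) := (S.filtA i).map S.toProd.toLinearMap

theorem mem_filt {i : ℕ} {b : ∀ p : S.Supp, S.O p} :
    b ∈ S.filt i ↔
      ∃ F : MvPolynomial (Fin (n + 1)) K, F.IsHomogeneous i ∧ S.toProd (S.mkA F) = b := by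
  simp only [filt, Submodule.mem_map, mem_filtA]
  constructor
  · rintro ⟨_, ⟨F, hF, rfl⟩, rfl⟩
    exact ⟨F, hF, rfl⟩
  · rintro ⟨F, hF, rfl⟩
    exact ⟨_, ⟨F, hF, rfl⟩, rfl⟩

theorem filt_mono : Monotone S.filt := fun _ _ h => Submodule.map_mono (S.filtA_mono h)

theorem exists_filt_eq_top : ∃ N, S.filt N = ⊤ := by
  obtain ⟨N, hN⟩ := S.exists_filtA_eq_top
  exact ⟨N, by rw [filt, hN, Submodule.map_top]; exact LinearEquiv.range _⟩

theorem mkA_eq_zero_iff {F : MvPolynomial (Fin (n + 1)) K} {i : ℕ} (hF : F.IsHomogeneous i) :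
    S.mkA F = 0 ↔ F ∈ S.I :=
  ⟨S.mem_I_of_mkA_eq_zero hF, S.mkA_eq_zero_of_mem⟩

theorem HF_eq_finrank_filt (i : ℕ) : S.HF i = Module.finrank K (S.filt i) := by
  rw [filt, LinearEquiv.finrank_map_eq, HF, hilb, filtA,
    ← LinearMap.range_domRestrict, ← LinearMap.range_domRestrict]
  have h1 := LinearMap.finrank_range_add_finrank_ker
    ((Ideal.Quotient.mkₐ K S.I).toLinearMap.domRestrict
      (MvPolynomial.homogeneousSubmodule (Fin (n + 1)) K i))
  have h2 := LinearMap.finrank_range_add_finrank_ker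
    (S.mkA.toLinearMap.domRestrict (MvPolynomial.homogeneousSubmodule (Fin (n + 1)) K i))
  have h3 : LinearMap.ker ((Ideal.Quotient.mkₐ K S.I).toLinearMap.domRestrict
      (MvPolynomial.homogeneousSubmodule (Fin (n + 1)) K i)) =
      LinearMap.ker (S.mkA.toLinearMap.domRestrict
        (MvPolynomial.homogeneousSubmodule (Fin (n + 1)) K i)) := by
    ext ⟨F, hF⟩
    simp only [LinearMap.mem_ker, LinearMap.domRestrict_apply, AlgHom.toLinearMap_apply]
    rw [S.mkA_eq_zero_iff hF]
    exact Ideal.Quotient.eq_zero_iff_mem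
  rw [h3] at h1
  omega

/-- `R_i = R̃_i` for `i = r_𝕏`. -/
theorem filt_rX : S.filt S.rX = ⊤ := by
  have hne : {i : ℕ | ∀ j, i ≤ j → S.HF j = S.deg}.Nonempty := by
    obtain ⟨N, hN⟩ := S.exists_filt_eq_top
    refine ⟨N, fun j hj => ?_⟩
    have : S.filt j = ⊤ := eq_top_iff.mpr (hN ▸ S.filt_mono hj)
    rw [HF_eq_finrank_filt, this, finrank_top, finrank_prod]
  have := Nat.sInf_mem hne S.rX le_rfl
  rw [HF_eq_finrank_filt, ← finrank_prod] at this
  exact Submodule.eq_top_of_finrank_eq this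

/-! ### Homogeneous elements of `Q^h(R)` -/

/-- The homogeneous element `(b_1 T_1ᵈ, …, b_s T_sᵈ)` of `Q^h(R)`. -/
def mono (b : ∀ p : S.Supp, S.O p) (d : ℤ) : S.Q :=
  fun p => LaurentPolynomial.C (b p) * LaurentPolynomial.T d

theorem mono_apply (b : ∀ p : S.Supp, S.O p) (d : ℤ) (p : S.Supp) :
    S.mono b d p = LaurentPolynomial.C (b p) * LaurentPolynomial.T d := rfl

theorem mul_apply (x y : S.Q) (p : S.Supp) : (x * y) p = x p * y p := rfl

theorem add_apply (x y : S.Q) (p : S.Supp) : (x + y) p = x p + y p := rfl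

theorem Q_ext {x y : S.Q} (h : ∀ p, x p = y p) : x = y := funext h

theorem mono_mul (b c : ∀ p : S.Supp, S.O p) (d e : ℤ) :
    S.mono b d * S.mono c e = S.mono (b * c) (d + e) := by
  refine S.Q_ext fun p => ?_
  rw [mul_apply, mono_apply, mono_apply, mono_apply, Pi.mul_apply, map_mul, LaurentPolynomial.T_add]
  ring

theorem mono_add (b c : ∀ p : S.Supp, S.O p) (d : ℤ) :
    S.mono (b + c) d = S.mono b d + S.mono c d := by
  refine S.Q_ext fun p => ?_
  rw [add_apply, mono_apply, mono_apply, mono_apply, Pi.add_apply, map_add, add_mul]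

theorem algebraMap_apply (f : LaurentPolynomial K) (p : S.Supp) :
    algebraMap (LaurentPolynomial K) S.Q f p =
      AddMonoidAlgebra.mapRingHom ℤ (algebraMap K (S.O p)) f := rfl

theorem algebraMap_C_mul_T (c : K) (d : ℤ) :
    algebraMap (LaurentPolynomial K) S.Q (LaurentPolynomial.C c * LaurentPolynomial.T d) =
      S.mono (algebraMap K _ c) d := by
  refine S.Q_ext fun p => ?_
  rw [algebraMap_apply, mono_apply, ← LaurentPolynomial.single_eq_C_mul_T,
    ← LaurentPolynomial.single_eq_C_mul_T, AddMonoidAlgebra.mapRingHom_single]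
  rfl

theorem mono_smul (c : K) (b : ∀ p : S.Supp, S.O p) (d e : ℤ) :
    S.mono (c • b) (e + d) =
      (LaurentPolynomial.C c * LaurentPolynomial.T e : LaurentPolynomial K) • S.mono b d := by
  rw [Algebra.smul_def c, Algebra.smul_def (R := LaurentPolynomial K), algebraMap_C_mul_T, mono_mul]

theorem iota_mkR {F : MvPolynomial (Fin (n + 1)) K} {i : ℕ} (hF : F.IsHomogeneous i) :
    S.iota (S.mkR F) = S.mono (S.toProd (S.mkA F)) i := by
  refine S.Q_ext fun p => ?_
  change Polynomial.toLaurent (S.germ p F) = _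
  rw [germ, AlgHom.comp_apply, S.homA_of_homogeneous hF, mono_apply, toProd_apply]
  simp

theorem mono_mem_range_iota {i : ℕ} {b : ∀ p : S.Supp, S.O p} (hb : b ∈ S.filt i) :
    S.mono b i ∈ Set.range S.iota := by
  obtain ⟨F, hF, rfl⟩ := S.mem_filt.mp hb
  exact ⟨S.mkR F, S.iota_mkR hF⟩

/-- Induction on the homogeneous elements of `R`. -/
theorem R_induction {M : S.R → Prop} (r : S.R)
    (hmk : ∀ (i : ℕ) (F : MvPolynomial (Fin (n + 1)) K), F.IsHomogeneous i → M (S.mkR F))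
    (hadd : ∀ x y, M x → M y → M (x + y)) : M r := by
  obtain ⟨F, rfl⟩ := Ideal.Quotient.mk_surjective r
  change M (S.mkR F)
  rw [← MvPolynomial.sum_homogeneousComponent F, map_sum]
  refine Finset.sum_induction _ M hadd ?_ fun d _ =>
    hmk d _ (MvPolynomial.homogeneousComponent_isHomogeneous d F)
  rw [← map_zero S.mkR]
  exact hmk 0 0 (MvPolynomial.isHomogeneous_zero _ _ _)

theorem algebraMap_polynomial_eq (f : K[X]) :
    S.iota (algebraMap K[X] S.R f) =
      algebraMap (LaurentPolynomial K) S.Q (Polynomial.toLaurent f) := by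
  induction f using Polynomial.induction_on' with
  | add f g hf hg => simp only [map_add, hf, hg]
  | monomial k c =>
    rw [← Polynomial.C_mul_X_pow_eq_monomial, Polynomial.toLaurent_C_mul_X_pow, algebraMap_C_mul_T]
    have h1 : algebraMap K[X] S.R (Polynomial.C c * Polynomial.X ^ k) =
        S.mkR (MvPolynomial.C c * MvPolynomial.X 0 ^ k) := by
      change Polynomial.aeval S.x0 _ = _
      rw [map_mul, map_mul, Polynomial.aeval_C, map_pow, map_pow, Polynomial.aeval_X]
      exact congrArg (· * S.x0 ^ k) (S.mkR.commutes c).symm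
    rw [h1, S.iota_mkR (MvPolynomial.isHomogeneous_C_mul_X_pow c 0 k)]
    congr 1
    rw [map_mul, map_pow, mkA_X0, one_pow, mul_one]
    funext p
    rw [toProd_apply]
    change algebraMap S.A (S.O p) (S.mkA (algebraMap K _ c)) = algebraMap K (S.O p) c
    rw [AlgHom.commutes, ← IsScalarTower.algebraMap_apply]

open Classical in
/-- The element of `Q^h(R)` concentrated at `p` with component `f`. -/
def conc (p : S.Supp) (f : LaurentPolynomial (S.O p)) : S.Q := Pi.single p f

open Classical in
theorem conc_C_mul_T (p : S.Supp) (a : S.O p) (d : ℤ) :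
    S.conc p (LaurentPolynomial.C a * LaurentPolynomial.T d) = S.mono (Pi.single p a) d := by
  refine S.Q_ext fun q => ?_
  rw [mono_apply, conc]
  by_cases h : q = p
  · subst h; simp
  · simp [h]

theorem mul_conc (p : S.Supp) (x : S.Q) (f : LaurentPolynomial (S.O p)) :
    x * S.conc p f = S.conc p (x p * f) := by
  classical
  refine S.Q_ext fun q => ?_
  rw [mul_apply, conc, conc]
  by_cases h : q = p
  · subst h; simp
  · simp [h]

open Classical in
theorem conc_add (p : S.Supp) (f g : LaurentPolynomial (S.O p)) :
    S.conc p (f + g) = S.conc p f + S.conc p g :=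
  Pi.single_add (f := fun p : S.Supp => LaurentPolynomial (S.O p)) p f g

open Classical in
theorem sum_conc [Fintype S.Supp] (x : S.Q) : ∑ p, S.conc p (x p) = x :=
  Finset.univ_sum_single (M := fun p : S.Supp => LaurentPolynomial (S.O p)) x

end ZeroDimSubscheme

theorem Polynomial.coeff_toLaurent_of_neg {R : Type*} [Semiring R] (f : R[X]) {d : ℤ}
    (hd : d < 0) : (Polynomial.toLaurent f).coeff d = 0 := by
  induction f using Polynomial.induction_on' with
  | add f g hf hg => rw [map_add, AddMonoidAlgebra.coeff_add, Finsupp.add_apply, hf, hg, add_zero]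
  | monomial k c =>
    rw [← Polynomial.C_mul_X_pow_eq_monomial, Polynomial.toLaurent_C_mul_X_pow,
      ← LaurentPolynomial.single_eq_C_mul_T, AddMonoidAlgebra.coeff_single,
      Finsupp.single_eq_of_ne (by omega)]

theorem LaurentPolynomial.exists_toLaurent_eq {R : Type*} [Semiring R] (x : LaurentPolynomial R)
    (hx : ∀ d < 0, x.coeff d = 0) : ∃ f : R[X], Polynomial.toLaurent f = x := by
  rw [← AddMonoidAlgebra.sum_coeff_single x]
  refine sum_mem (S := (Polynomial.toLaurent (R := R)).rangeS) fun d _ => ?_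
  rcases lt_or_ge d 0 with h | h
  · rw [hx d h]
    exact ⟨0, by simp⟩
  · lift d to ℕ using h
    exact ⟨Polynomial.C (x.coeff d) * Polynomial.X ^ d, by
      rw [Polynomial.toLaurent_C_mul_X_pow, LaurentPolynomial.single_eq_C_mul_T]⟩

namespace ZeroDimSubscheme

variable {K : Type*} [Field K] {n : ℕ} (S : ZeroDimSubscheme K n)

/-! ### Trace maps -/

variable (σ : S.Q →ₗ[LaurentPolynomial K] LaurentPolynomial K)

/-- The restriction of `σ` to the homogeneous elements of degree zero. -/
def tau : (∀ p : S.Supp, S.O p) →ₗ[K] K where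
  toFun b := (σ (S.mono b 0)).coeff 0
  map_add' b c := by simp [mono_add]
  map_smul' c b := by
    have h := S.mono_smul c b 0 0
    rw [add_zero] at h
    rw [h, map_smul, LaurentPolynomial.T_zero, mul_one, smul_eq_mul,
      ← LaurentPolynomial.smul_eq_C_mul]
    rfl

variable {S σ}

theorem IsTraceMap.apply_mono (hσ : S.IsTraceMap σ) (b : ∀ p : S.Supp, S.O p) (d : ℤ) :
    σ (S.mono b d) = LaurentPolynomial.C (S.tau σ b) * LaurentPolynomial.T d := by
  obtain ⟨c, hc⟩ := hσ.degree_zero (S.mono b 0) 0 fun p => ⟨b p, rfl⟩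
  have h := S.mono_smul 1 b 0 d
  rw [one_smul, add_zero, map_one, one_mul] at h
  have ht : S.tau σ b = c := by
    change (σ (S.mono b 0)).coeff 0 = c
    rw [hc]
    simp
  rw [h, map_smul, hc, ht, LaurentPolynomial.T_zero, mul_one, smul_eq_mul, mul_comm]

open Classical in
theorem IsTraceMap.coeff_apply_conc (hσ : S.IsTraceMap σ) (p : S.Supp)
    (f : LaurentPolynomial (S.O p)) (d : ℤ) :
    (σ (S.conc p f)).coeff d = S.tau σ (Pi.single p (f.coeff d)) := by
  induction f using LaurentPolynomial.induction_on' with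
  | add f g hf hg =>
    rw [conc_add, map_add, AddMonoidAlgebra.coeff_add, Finsupp.add_apply, hf, hg,
      AddMonoidAlgebra.coeff_add, Finsupp.add_apply, Pi.single_add, map_add]
  | C_mul_T e a =>
    rw [conc_C_mul_T, hσ.apply_mono, ← LaurentPolynomial.single_eq_C_mul_T,
      ← LaurentPolynomial.single_eq_C_mul_T, AddMonoidAlgebra.coeff_single,
      AddMonoidAlgebra.coeff_single]
    by_cases h : d = e
    · subst h; simp
    · simp [h]

theorem IsTraceMap.eq_zero_of_tau_mul_eq_zero (hσ : S.IsTraceMap σ) {b : ∀ p : S.Supp, S.O p}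
    (hb : ∀ c, S.tau σ (b * c) = 0) : b = 0 := by
  classical
  have := Fintype.ofFinite S.Supp
  have h0 : S.Sig σ (S.mono b 0) = S.Sig σ 0 := by
    ext1 q
    change σ (S.mono b 0 * q) = σ (0 * q)
    rw [zero_mul, map_zero, ← S.sum_conc (S.mono b 0 * q), map_sum]
    refine Finset.sum_eq_zero fun p _ => ?_
    ext d
    have h1 : ((S.mono b 0 * q) p).coeff d = b p * (q p).coeff d := by
      rw [mul_apply, mono_apply, LaurentPolynomial.T_zero, mul_one,
        ← LaurentPolynomial.smul_eq_C_mul]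
      rfl
    rw [hσ.coeff_apply_conc, h1]
    have h2 : (Pi.single p (b p * (q p).coeff d) : ∀ p : S.Supp, S.O p) =
        b * Pi.single p ((q p).coeff d) := by
      funext q'
      by_cases h : q' = p
      · subst h; simp
      · simp [h]
    rw [h2, hb]
    rfl
  have h1 := hσ.basis.1 h0
  funext p
  have h2 : (S.mono b 0 p).coeff 0 = 0 := by rw [h1]; rfl
  rw [mono_apply, ← LaurentPolynomial.single_eq_C_mul_T, AddMonoidAlgebra.coeff_single,
    Finsupp.single_eq_same] at h2
  exact h2

/-- Every linear form on `∏_p 𝒪_{𝕏,p}` is a multiple of the trace form. -/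
theorem IsTraceMap.exists_tau_mul_eq (hσ : S.IsTraceMap σ)
    (β : (∀ p : S.Supp, S.O p) →ₗ[K] K) : ∃ g, ∀ c, S.tau σ (g * c) = β c := by
  let Φ : (∀ p : S.Supp, S.O p) →ₗ[K] Module.Dual K (∀ p : S.Supp, S.O p) :=
    (LinearMap.mul K (∀ p : S.Supp, S.O p)).compr₂ (S.tau σ)
  have hΦ : ∀ g c, Φ g c = S.tau σ (g * c) := fun g c => rfl
  have hinj : Function.Injective Φ := by
    rw [injective_iff_map_eq_zero]
    intro g hg
    exact hσ.eq_zero_of_tau_mul_eq_zero fun c => by rw [← hΦ, hg]; rfl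
  obtain ⟨g, hg⟩ := (LinearMap.injective_iff_surjective_of_finrank_eq_finrank
    (Subspace.dual_finrank_eq).symm).mp hinj β
  exact ⟨g, fun c => by rw [← hg, hΦ]⟩

/-! ### The inclusion `𝔉 · 𝔠 ⊆ R̃` -/

variable (S) in
theorem mem_Rtilde {x : S.Q} :
    x ∈ S.Rtilde ↔ ∀ p, ∃ f : (S.O p)[X], Polynomial.toLaurent f = x p := by
  constructor
  · rintro ⟨y, rfl⟩ p
    exact ⟨y p, rfl⟩
  · intro h
    choose y hy using h
    exact ⟨y, funext hy⟩

theorem mul_mem_Rtilde {x y : S.Q} (hx : x ∈ S.Rtilde) (hy : y ∈ S.Rtilde) :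
    x * y ∈ S.Rtilde := by
  rw [mem_Rtilde] at hx hy ⊢
  intro p
  obtain ⟨f, hf⟩ := hx p
  obtain ⟨g, hg⟩ := hy p
  exact ⟨f * g, by rw [map_mul, hf, hg, mul_apply]⟩

theorem conc_toLaurent_mem_Rtilde (p : S.Supp) (f : (S.O p)[X]) :
    S.conc p (Polynomial.toLaurent f) ∈ S.Rtilde := by
  classical
  rw [mem_Rtilde]
  intro q
  by_cases h : q = p
  · subst h; exact ⟨f, by simp [conc]⟩
  · exact ⟨0, by simp [conc, h]⟩

theorem mem_one_iff {x : S.Q} : x ∈ (1 : Submodule S.R S.Q) ↔ x ∈ Set.range S.iota := by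
  rw [Submodule.mem_one]
  rfl

theorem IsTraceMap.conductor_mul_complementary_le (hσ : S.IsTraceMap σ) :
    S.conductor * S.complementary σ ≤ S.Rtilde := by
  classical
  rw [Submodule.mul_le]
  rintro f ⟨-, hf⟩ g ⟨φ, hφ⟩
  rw [mem_Rtilde]
  intro p
  refine LaurentPolynomial.exists_toLaurent_eq _ fun d hd => ?_
  suffices h : (Pi.single p (((f * g) p).coeff d) : ∀ p : S.Supp, S.O p) = 0 by
    simpa using congrFun h p
  refine hσ.eq_zero_of_tau_mul_eq_zero fun c => ?_
  obtain ⟨r, hr⟩ := mem_one_iff.mp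
    (hf _ (conc_toLaurent_mem_Rtilde p (Polynomial.C (c p))))
  have h1 := hφ r
  change σ (g * S.iota r) = _ at h1
  rw [hr, ← mul_assoc, mul_comm g f, mul_conc] at h1
  have h2 := hσ.coeff_apply_conc p ((f * g) p * Polynomial.toLaurent (Polynomial.C (c p))) d
  rw [h1, Polynomial.coeff_toLaurent_of_neg _ hd, Polynomial.toLaurent_C, mul_comm,
    ← LaurentPolynomial.smul_eq_C_mul] at h2
  rw [h2]
  congr 1
  funext q
  by_cases h : q = p
  · subst h; simp [mul_comm]
  · simp [h]

/-! ### The inclusion `R̃ ⊆ 𝔉 · 𝔠` -/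

/-- If `g` is orthogonal to `R_j` for `j < i`, then `g T⁻ⁱ` lies in the complementary module. -/
theorem IsTraceMap.mono_mem_complementary (hσ : S.IsTraceMap σ) {g : ∀ p : S.Supp, S.O p} {i : ℕ}
    (hg : ∀ j < i, ∀ b ∈ S.filt j, S.tau σ (g * b) = 0) :
    S.mono g (-i) ∈ S.complementary σ := by
  have hex : ∀ r : S.R, ∃ f : K[X], Polynomial.toLaurent f = σ (S.mono g (-i) * S.iota r) := by
    intro r
    induction r using S.R_induction with
    | hmk j F hF =>
      rw [S.iota_mkR hF, mono_mul, hσ.apply_mono]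
      rcases lt_or_ge j i with hj | hj
      · rw [hg j hj _ (S.mem_filt.mpr ⟨F, hF, rfl⟩)]
        exact ⟨0, by simp⟩
      · obtain ⟨k, rfl⟩ := Nat.exists_eq_add_of_le hj
        refine ⟨Polynomial.C (S.tau σ (g * S.toProd (S.mkA F))) * Polynomial.X ^ k, ?_⟩
        rw [Polynomial.toLaurent_C_mul_X_pow]
        congr 2
        push_cast
        ring
    | hadd x y hx hy =>
      obtain ⟨f, hf⟩ := hx
      obtain ⟨f', hf'⟩ := hy
      exact ⟨f + f', by rw [map_add, hf, hf', map_add, mul_add, map_add]⟩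
  choose φ hφ using hex
  refine ⟨{ toFun := φ, map_add' := fun x y => ?_, map_smul' := fun f x => ?_ }, fun r => ?_⟩
  · apply Polynomial.toLaurent_injective
    rw [map_add, hφ, hφ, hφ, map_add, mul_add, map_add]
  · apply Polynomial.toLaurent_injective
    rw [RingHom.id_apply, smul_eq_mul, map_mul, hφ, hφ, Algebra.smul_def, map_mul S.iota,
      algebraMap_polynomial_eq, mul_left_comm, ← Algebra.smul_def, map_smul, smul_eq_mul]
  · exact (hφ r).symm

theorem mul_mem_conductor {x y : S.Q} (hx : x ∈ S.Rtilde) (hy : y ∈ S.conductor) :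
    x * y ∈ S.conductor :=
  ⟨mul_mem_Rtilde hx hy.1, fun g hg => by
    rw [mul_comm x y, mul_assoc]; exact hy.2 _ (mul_mem_Rtilde hx hg)⟩

open Classical in
/-- If `𝒪_{𝕏,p} ⊆ R_i`, then `𝒪_{𝕏,p} T_pⁱ` lies in the conductor. -/
theorem conc_mem_conductor {p : S.Supp} {i : ℕ}
    (hi : ∀ a : S.O p, (Pi.single p a : ∀ p : S.Supp, S.O p) ∈ S.filt i) (a : S.O p) :
    S.conc p (LaurentPolynomial.C a * LaurentPolynomial.T i) ∈ S.conductor := by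
  refine ⟨?_, fun g hg => ?_⟩
  · rw [← Polynomial.toLaurent_C_mul_X_pow]
    exact conc_toLaurent_mem_Rtilde p _
  · obtain ⟨f, hf⟩ := S.mem_Rtilde.mp hg p
    rw [mul_comm, mul_conc, ← hf]
    clear hf
    induction f using Polynomial.induction_on' with
    | add f f' h h' =>
      rw [map_add, add_mul, conc_add]
      exact add_mem h h'
    | monomial k c =>
      rw [← Polynomial.C_mul_X_pow_eq_monomial, Polynomial.toLaurent_C_mul_X_pow, mul_mul_mul_comm,
        ← map_mul, ← LaurentPolynomial.T_add, conc_C_mul_T, ← Nat.cast_add, mem_one_iff]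
      exact S.mono_mem_range_iota (S.filt_mono (Nat.le_add_left _ _) (hi _))

open Classical in
/-- The inclusion `R̃ ⊆ 𝔉 · 𝔠` holds if every `p` has a degree `i` with `𝒪_{𝕏,p} ⊆ R_i` such that
a socle element of `𝒪_{𝕏,p}` is not in `R_j` for `j < i`. -/
theorem IsTraceMap.Rtilde_le (hσ : S.IsTraceMap σ)
    (h : ∀ p : S.Supp, ∃ i : ℕ,
      (∀ a : S.O p, (Pi.single p a : ∀ p : S.Supp, S.O p) ∈ S.filt i) ∧
      ∃ t : S.O p, t ≠ 0 ∧ (∀ b ∈ IsLocalRing.maximalIdeal (S.O p), t * b = 0) ∧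
        ∀ j < i, (Pi.single p t : ∀ p : S.Supp, S.O p) ∉ S.filt j) :
    S.Rtilde ≤ S.conductor * S.complementary σ := by
  have := Fintype.ofFinite S.Supp
  intro x hx
  rw [← S.sum_conc x]
  refine sum_mem fun p _ => ?_
  obtain ⟨i, hi, t, ht0, ht, hti⟩ := h p
  obtain ⟨g, hg, hgt⟩ : ∃ g : ∀ p : S.Supp, S.O p,
      (∀ j < i, ∀ b ∈ S.filt j, S.tau σ (g * b) = 0) ∧ g p * t ≠ 0 := by
    obtain ⟨V, htV, hV⟩ : ∃ V : Submodule K (∀ p : S.Supp, S.O p),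
        Pi.single p t ∉ V ∧ ∀ j < i, S.filt j ≤ V := by
      rcases i with _ | i
      · exact ⟨⊥, by simpa using ht0, fun j hj => absurd hj (Nat.not_lt_zero j)⟩
      · exact ⟨S.filt i, hti i (Nat.lt_succ_self i),
          fun j hj => S.filt_mono (Nat.lt_succ_iff.mp hj)⟩
    obtain ⟨β, hβt, hβV⟩ := Submodule.exists_le_ker_of_notMem htV
    obtain ⟨g, hg⟩ := hσ.exists_tau_mul_eq β
    refine ⟨g, fun j hj b hb => by rw [hg]; exact hβV (hV j hj hb), fun h0 => hβt ?_⟩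
    rw [← hg]
    convert map_zero (S.tau σ)
    funext q
    by_cases h : q = p
    · subst h; simpa using h0
    · simp [h]
  have hu : IsUnit (g p) := by
    by_contra hn
    exact hgt (by rw [mul_comm]; exact ht _ ((IsLocalRing.mem_maximalIdeal _).mpr hn))
  obtain ⟨a, ha⟩ := hu.exists_left_inv
  have hx' : S.conc p (x p) =
      x * S.conc p (LaurentPolynomial.C a * LaurentPolynomial.T i) * S.mono g (-i) := by
    rw [mul_conc, mul_comm, mul_conc, mono_apply]
    congr 1
    rw [mul_comm, mul_assoc, mul_mul_mul_comm, ← map_mul, ha, ← LaurentPolynomial.T_add]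
    simp
  rw [hx']
  exact Submodule.mul_mem_mul (mul_mem_conductor hx (conc_mem_conductor hi a))
    (hσ.mono_mem_complementary hg)

end ZeroDimSubscheme

/-- An Artinian local ring has a nonzero socle element. -/
theorem IsLocalRing.exists_ne_zero_mul_maximalIdeal_eq_zero (R : Type*) [CommRing R]
    [IsLocalRing R] [IsArtinianRing R] :
    ∃ t : R, t ≠ 0 ∧ ∀ b ∈ IsLocalRing.maximalIdeal R, t * b = 0 := by
  classical
  have hnil : ∃ k, IsLocalRing.maximalIdeal R ^ k = ⊥ := by
    have := IsArtinianRing.isNilpotent_jacobson_bot (R := R)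
    rwa [IsLocalRing.jacobson_eq_maximalIdeal _ bot_ne_top] at this
  have hpos : 0 < Nat.find hnil := by
    rw [Nat.find_pos]
    simp
  have hne := Nat.find_min hnil (Nat.sub_lt hpos one_pos)
  obtain ⟨t, ht, ht0⟩ := Submodule.exists_mem_ne_zero_of_ne_bot hne
  refine ⟨t, ht0, fun b hb => ?_⟩
  have := Ideal.mul_mem_mul ht hb
  rwa [← pow_succ, Nat.sub_add_cancel (Nat.one_le_iff_ne_zero.mpr hpos.ne'), Nat.find_spec hnil, Ideal.mem_bot] at this

namespace ZeroDimSubscheme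

variable {K : Type*} [Field K] {n : ℕ} (S : ZeroDimSubscheme K n)

open Classical in
theorem single_notMem_filt_of_lt_mu {p : S.Supp} {a : S.O p} {j : ℕ} (h : j < S.mu p a) :
    (Pi.single p a : ∀ p : S.Supp, S.O p) ∉ S.filt j := by
  intro hmem
  refine Nat.notMem_of_lt_sInf h ?_
  have := S.mono_mem_range_iota hmem
  rwa [← conc_C_mul_T] at this

theorem germ_eq_zero_iff {F : MvPolynomial (Fin (n + 1)) K} {i : ℕ} (hF : F.IsHomogeneous i)
    (p : S.Supp) : S.germ p F = 0 ↔ S.toProd (S.mkA F) p = 0 := by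
  rw [germ, AlgHom.comp_apply, S.homA_of_homogeneous hF, toProd_apply]
  simp [Polynomial.C_mul_X_pow_eq_monomial]

theorem mem_IY_iff {F : MvPolynomial (Fin (n + 1)) K} {i : ℕ} (hF : F.IsHomogeneous i)
    (p : S.Supp) : F ∈ S.IY p ↔ ∀ q, q ≠ p → S.toProd (S.mkA F) q = 0 := by
  simp only [IY, Ideal.mem_iInf, vanishingIdealAt, RingHom.mem_ker]
  exact forall₂_congr fun q _ => S.germ_eq_zero_iff hF q

open Classical in
theorem single_notMem_filt_of_lt_alphaY {p : S.Supp} {a : S.O p} (ha : a ≠ 0) {j : ℕ}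
    (h : j < S.alphaY p) : (Pi.single p a : ∀ p : S.Supp, S.O p) ∉ S.filt j := by
  intro hmem
  obtain ⟨F, hF, hFa⟩ := S.mem_filt.mp hmem
  refine Nat.notMem_of_lt_sInf h ⟨S.mkR F, ⟨F, hF, rfl⟩, Ideal.mem_map_of_mem _ ?_, fun h0 => ?_⟩
  · rw [S.mem_IY_iff hF, hFa]
    exact fun q hq => Pi.single_eq_of_ne hq a
  · rw [S.mkA_eq_zero_of_mem (Ideal.Quotient.eq_zero_iff_mem.mp h0), map_zero] at hFa
    exact ha (by simpa using (congrFun hFa p).symm)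

open Classical in
/-- If `HF_{𝕐_p}(i) = HF_𝕏(i) - ν_p`, then `𝒪_{𝕏,p} ⊆ R_i`. -/
theorem single_mem_filt_of_HFY_add_nu {p : S.Supp} {i : ℕ} (h : S.HFY p i + S.nu p = S.HF i)
    (a : S.O p) : (Pi.single p a : ∀ p : S.Supp, S.O p) ∈ S.filt i := by
  let H := MvPolynomial.homogeneousSubmodule (Fin (n + 1)) K i
  let fX : H →ₗ[K] ∀ p : S.Supp, S.O p :=
    (S.toProd.toLinearMap ∘ₗ S.mkA.toLinearMap).domRestrict H
  let fY := (Ideal.Quotient.mkₐ K (S.IY p)).toLinearMap.domRestrict H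
  have hX : LinearMap.range fX = S.filt i := by
    rw [LinearMap.range_domRestrict, Submodule.map_comp]
    rfl
  have h1 := LinearMap.finrank_range_add_finrank_ker fX
  have h2 := LinearMap.finrank_range_add_finrank_ker fY
  rw [hX, ← S.HF_eq_finrank_filt] at h1
  have h3 : Module.finrank K (LinearMap.range fY) = S.HFY p i := by
    rw [LinearMap.range_domRestrict]; rfl
  let ev : LinearMap.ker fY →ₗ[K] S.O p := (LinearMap.proj p ∘ₗ fX) ∘ₗ (LinearMap.ker fY).subtype
  have hker : ∀ F : H, F ∈ LinearMap.ker fY ↔ ∀ q, q ≠ p → fX F q = 0 := by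
    rintro ⟨F, hF⟩
    exact Ideal.Quotient.eq_zero_iff_mem.trans (S.mem_IY_iff hF p)
  have hle : LinearMap.ker fX ≤ LinearMap.ker fY := by
    intro F hF
    rw [hker, LinearMap.mem_ker.mp hF]
    exact fun _ _ => rfl
  have hev : LinearMap.ker ev = (LinearMap.ker fX).comap (LinearMap.ker fY).subtype := by
    ext ⟨F, hF⟩
    rw [Submodule.mem_comap, LinearMap.mem_ker, LinearMap.mem_ker]
    change fX F p = 0 ↔ fX F = 0
    refine ⟨fun h0 => funext fun q => ?_, fun h0 => by rw [h0]; rfl⟩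
    by_cases hq : q = p
    · subst hq; exact h0
    · exact (hker F).mp hF q hq
  have h4 := LinearMap.finrank_range_add_finrank_ker (K := K) (V := LinearMap.ker fY) (V₂ := S.O p) ev
  rw [hev, (Submodule.comapSubtypeEquivOfLe hle).finrank_eq] at h4
  have hsurj : LinearMap.range ev = ⊤ := by
    refine Submodule.eq_top_of_finrank_eq ?_
    rw [nu] at h
    omega
  obtain ⟨⟨F, hF⟩, hFa⟩ := LinearMap.range_eq_top.mp hsurj a
  refine S.mem_filt.mpr ⟨F, F.2, ?_⟩
  funext q
  by_cases hq : q = p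
  · subst hq
    rw [Pi.single_eq_same]
    exact hFa
  · rw [Pi.single_eq_of_ne hq]
    exact (hker F).mp hF q hq

end ZeroDimSubscheme
end

theorem dedekind_CB_stmt12 {K : Type*} [Field K] {n : ℕ} (S : ZeroDimSubscheme K n)
    (hG : S.LocallyGorenstein)
    (σ : S.Q →ₗ[LaurentPolynomial K] LaurentPolynomial K) (hσ : S.IsTraceMap σ)
    (h : S.IsCayleyBacharach ∨
      ∀ (p : S.Supp) (i : ℕ),
        (i < S.alphaY p → (S.HFY p i : ℤ) = S.HF i) ∧
        (S.alphaY p ≤ i → (S.HFY p i : ℤ) = S.HF i - S.nu p)) :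
    S.conductor * S.complementary σ = S.Rtilde := by
  classical
  refine le_antisymm hσ.conductor_mul_complementary_le (hσ.Rtilde_le fun p => ?_)
  have : IsArtinianRing (S.O p) := IsArtinianRing.of_finite K (S.O p)
  obtain ⟨t, ht0, ht⟩ := IsLocalRing.exists_ne_zero_mul_maximalIdeal_eq_zero (S.O p)
  rcases h with h | h
  · refine ⟨S.rX, fun a => by rw [S.filt_rX]; trivial, ?_⟩
    rcases Nat.eq_zero_or_pos S.rX with hr | hr
    · exact ⟨t, ht0, ht, fun j hj => by omega⟩
    have hpos : 0 < S.degAt p := hr.trans_le (h p)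
    obtain ⟨J, -, s, e, hs, -, hm⟩ := Nat.sInf_mem (Nat.nonempty_of_pos_sInf hpos)
    have hle : S.rX ≤ S.maxSepDegree p s e := hm ▸ h p
    obtain ⟨k, -, hk⟩ := (Finset.le_sup_iff hr).mp hle
    have hnot : ∀ j < S.rX, (Pi.single p (e k * s) : ∀ p : S.Supp, S.O p) ∉ S.filt j :=
      fun j hj => S.single_notMem_filt_of_lt_mu (hj.trans_le hk)
    refine ⟨e k * s, fun h0 => hnot 0 hr ?_, fun b hb => ?_, hnot⟩
    · rw [h0, Pi.single_zero]
      exact zero_mem _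
    · rw [mul_assoc, hs.socle b hb, mul_zero]
  · refine ⟨S.alphaY p, S.single_mem_filt_of_HFY_add_nu ?_, t, ht0, ht,
      fun j hj => S.single_notMem_filt_of_lt_alphaY ht0 hj⟩
    have := (h p (S.alphaY p)).2 le_rfl
    omega
end

section
/- Let $K$ be a field, $P=K[X_0,\dots,X_n]$ with the standard grading, and let $\mathbb X\subseteq\mathbb P^n_K$ be a $0$-dimensional locally Gorenstein closed subscheme with support $\{p_1,\dots,p_s\}$, no point of which lies on the hyperplane $X_0=0$. Let $I_{\mathbb X}$ be its (saturated) homogeneous vanishing ideal, $R=P/I_{\mathbb X}$ its homogeneous coordinate ring, $x_0$ the image of $X_0$ in $R$, $\deg\mathbb X=\sum_j\dim_K\mathcal O_{\mathbb X,p_j}$, and $r_{\mathbb X}$ the least $i\ge 0$ with $\dim_K R_k=\deg\mathbb X$ for all $k\ge i$. Let $Q=Q^h(R)=\prod_{j=1}^s\mathcal O_{\mathbb X,p_j}[T_j,T_j^{-1}]$ be the homogeneous ring of quotients of $R$, with $R$ embedded by $f\mapsto(f_{p_1}T_1^i,\dots,f_{p_s}T_s^i)$ for $f\in R_i$, where $f_{p_j}$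 is the germ at $p_j$ of $f/x_0^i$; let $\widetilde R=\prod_j\mathcal O_{\mathbb X,p_j}[T_j]\subseteq Q$, $L_0=K[x_0,x_0^{-1}]\subseteq Q$, and let $\mathfrak F_{\widetilde R/R}=\{f\in\widetilde R\mid f\widetilde R\subseteq R\}$ be the conductor. Let $\sigma$ be a homogeneous trace map of degree zero of $Q/L_0$, i.e. a homogeneous element of degree zero of $\operatorname{Hom}_{L_0}(Q,L_0)$ such that $\Sigma:Q\to\operatorname{Hom}_{L_0}(Q,L_0)$, $g\mapsto g\cdot\sigma$, is bijective. The Dedekind complementary module is $\mathfrak C^\sigma_{\mathbb X}=\{\Sigma^{-1}(\varphi\otimes\mathrm{id}_{L_0})\mid\varphi\in\operatorname{Hom}_{K[x_0]}(R,K[x_0])\}\subseteq Q$, the Dedekind different is $\delta^\sigma_{\mathbb X}=\{f\in Q\mid f\,\mathfrak C^\sigma_{\mathbb X}\subseteq R\}$, and $\operatorname{tr}(\mathfrak C^\sigma_{\mathbb X})=\sum_{\phi\in\operatorname{Hom}_R(\mathfrak C^\sigma_{\mathbb X},R)}\phi(\mathfrak C^\sigma_{\mathbb X})$. One says that $\mathbb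 X$ has minimal Dedekind different if $\delta^\sigma_{\mathbb X}=\bigoplus_{i\ge 2r_{\mathbb X}}R_i$. A maximal $p_j$-subscheme is a (possibly empty) closed subscheme $\mathbb Y\subseteq\mathbb X$ with $\mathcal O_{\mathbb Y,p_k}=\mathcal O_{\mathbb X,p_k}$ for $k\ne j$ and $\deg\mathbb Y=\deg\mathbb X-\dim_K\kappa(p_j)$, where $\kappa(p_j)$ is the residue field at $p_j$; its ideal in $\prod_k\mathcal O_{\mathbb X,p_k}$ is generated by $(0,\dots,0,s_j,0,\dots,0)$ for some nonzero socle element $s_j$ of $\mathcal O_{\mathbb X,p_j}$. For $a\in\mathcal O_{\mathbb X,p_j}$ let $\mu(a)=\min\{i\in\mathbb N\mid(0,\dots,0,aT_j^i,0,\dots,0)\in R\}$, and let $\mu_{\mathbb Y/\mathbb X}=\max_k\mu(e_ks_j)$, where $e_1,e_2,\dots\in\mathcal O_{\mathbb X,p_j}$ are elements whose residue classes form a $K$-basis of $\kappa(p_j)$ (the value is independent of the choices). Let $\deg_{\mathbb X}(p_j)$ be the minimum of $\mu_{\mathbb Y/\mathbb X}$ over all maximal $p_j$-subschemes $\mathbb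 Y$ of $\mathbb X$. One calls $\mathbb X$ a Cayley–Bacharach scheme if $\deg_{\mathbb X}(p_j)\ge r_{\mathbb X}$ for all $j$. Then: (a) if $\mathbb X$ is a Cayley–Bacharach scheme, then $\mathfrak F_{\widetilde R/R}\subseteq\operatorname{tr}(\mathfrak C^\sigma_{\mathbb X})$; (b) $\mathbb X$ is a Cayley–Bacharach scheme with $\mathfrak F_{\widetilde R/R}=\operatorname{tr}(\mathfrak C^\sigma_{\mathbb X})$ if and only if $\mathbb X$ has minimal Dedekind different. -/
/-! Zero-dimensional subschemes `𝕏` of projective `n`-space over a field `K`, no point of whose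
support lies on the hyperplane `X₀ = 0`, together with their homogeneous coordinate ring, their
homogeneous ring of quotients, the conductor, the Dedekind complementary module, the Dedekind
different and the Cayley–Bacharach property. -/

open scoped LaurentPolynomial

universe u

noncomputable section

attribute [local instance] MvPolynomial.gradedAlgebra

/-- A 0-dimensional closed subscheme `𝕏 ⊆ ℙⁿ_K`, given by its homogeneous vanishing ideal
`I_𝕏 ⊆ P = K[X₀,…,Xₙ]`, such that no point of `𝕏` lies on `Z(X₀)`. -/
structure ZeroDimScheme (K : Type u) [Field K] (n : ℕ) where
  /-- the homogeneous vanishing ideal `I_𝕏` -/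
  I : Ideal (MvPolynomial (Fin (n + 1)) K)
  /-- `I_𝕏` is homogeneous for the standard grading -/
  homogeneous : I.IsHomogeneous (MvPolynomial.homogeneousSubmodule (Fin (n + 1)) K)
  /-- `I_𝕏` is saturated with respect to `⟨X₀,…,Xₙ⟩` -/
  saturated : ∀ F : MvPolynomial (Fin (n + 1)) K, (∀ k, MvPolynomial.X k * F ∈ I) → F ∈ I
  /-- `dim 𝕏 = 0`, i.e. the homogeneous coordinate ring has Krull dimension one -/
  dim_eq_zero : ringKrullDim (MvPolynomial (Fin (n + 1)) K ⧸ I) = 1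
  /-- no point of `𝕏` lies on `Z(X₀)`: a homogeneous prime ideal containing `I_𝕏` and `X₀`
  contains the irrelevant ideal -/
  avoids : ∀ 𝔭 : Ideal (MvPolynomial (Fin (n + 1)) K), 𝔭.IsPrime →
    𝔭.IsHomogeneous (MvPolynomial.homogeneousSubmodule (Fin (n + 1)) K) →
    I ≤ 𝔭 → MvPolynomial.X 0 ∈ 𝔭 → ∀ k, MvPolynomial.X k ∈ 𝔭

/-- A local (Noetherian) ring is Gorenstein if it has finite injective dimension as a module
over itself. -/
def IsGorensteinLocal (A : Type u) [CommRing A] : Prop :=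
  IsNoetherianRing A ∧ IsLocalRing A ∧
    ∃ d : ℕ, CategoryTheory.HasInjectiveDimensionLT (ModuleCat.of A A) d

namespace ZeroDimScheme

variable {K : Type u} [Field K] {n : ℕ} (X : ZeroDimScheme K n)

/-! ### The homogeneous coordinate ring -/

/-- The homogeneous coordinate ring `R = P / I_𝕏`. -/
abbrev R : Type u := MvPolynomial (Fin (n + 1)) K ⧸ X.I

/-- The homogeneous component `R_i`. -/
def Rdeg (i : ℕ) : Submodule K X.R :=
  (MvPolynomial.homogeneousSubmodule (Fin (n + 1)) K i).map
    (Ideal.Quotient.mkₐ K X.I).toLinearMap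

/-- The image `x₀` of `X₀` in `R`. -/
def x0 : X.R := Ideal.Quotient.mk X.I (MvPolynomial.X 0)

/-- The subring `K[x₀] ⊆ R`. -/
abbrev Kx0 : Subalgebra K X.R := Algebra.adjoin K {X.x0}

/-! ### Points and local rings -/

/-- The coordinate ring `P / (I_𝕏 + ⟨X₀ - 1⟩)` of `𝕏`, viewed as a closed subscheme of the
affine space `D₊(X₀)`; it is the ring of global sections of `𝕏`. -/
def affineRing : Type u :=
  MvPolynomial (Fin (n + 1)) K ⧸ (X.I ⊔ Ideal.span {MvPolynomial.X 0 - 1})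

instance : CommRing X.affineRing :=
  inferInstanceAs
    (CommRing (MvPolynomial (Fin (n + 1)) K ⧸ (X.I ⊔ Ideal.span {MvPolynomial.X 0 - 1})))

instance : Algebra K X.affineRing :=
  inferInstanceAs
    (Algebra K (MvPolynomial (Fin (n + 1)) K ⧸ (X.I ⊔ Ideal.span {MvPolynomial.X 0 - 1})))

/-- The residue class map `P → P / (I_𝕏 + ⟨X₀ - 1⟩)`. -/
def toAffine : MvPolynomial (Fin (n + 1)) K →ₐ[K] X.affineRing :=
  Ideal.Quotient.mkₐ K (X.I ⊔ Ideal.span {MvPolynomial.X 0 - 1})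

/-- The support of `𝕏`, i.e. its set of closed points. -/
abbrev Supp : Type u := MaximalSpectrum X.affineRing

/-- The local ring `𝒪_{𝕏,p}`. -/
abbrev localRing (p : X.Supp) : Type u := Localization.AtPrime p.asIdeal

/-- The germ at `p` of a polynomial; for `F` homogeneous of degree `i` it is the germ of
`F / X₀ⁱ`. -/
def germ (p : X.Supp) : MvPolynomial (Fin (n + 1)) K →ₐ[K] X.localRing p :=
  (IsScalarTower.toAlgHom K X.affineRing (X.localRing p)).comp X.toAffine

/-- The residue field `κ(p)`. -/
abbrev residueField (p : X.Supp) : Type u := IsLocalRing.ResidueField (X.localRing p)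

/-- `𝕏` is locally Gorenstein. -/
def LocallyGorenstein : Prop := ∀ p : X.Supp, IsGorensteinLocal (X.localRing p)

/-- `deg 𝕏 = ∑_p dim_K 𝒪_{𝕏,p}`. -/
def deg : ℕ := ∑ᶠ p : X.Supp, Module.finrank K (X.localRing p)

/-- The regularity index `r_𝕏`: the least `i` with `dim_K R_j = deg 𝕏` for all `j ≥ i`. -/
def reg : ℕ := sInf {i : ℕ | ∀ j, i ≤ j → Module.finrank K (X.Rdeg j) = X.deg}

/-! ### The homogeneous ring of quotients -/

/-- The homogeneous ring of quotients `Q^h(R) = ∏_p 𝒪_{𝕏,p}[T_p, T_p⁻¹]`. -/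
def Q : Type u := ∀ p : X.Supp, (X.localRing p)[T;T⁻¹]

instance : CommRing X.Q := inferInstanceAs (CommRing (∀ p : X.Supp, (X.localRing p)[T;T⁻¹]))

instance : Algebra K X.Q := inferInstanceAs (Algebra K (∀ p : X.Supp, (X.localRing p)[T;T⁻¹]))

/-- The element `(a_p T_pⁱ)_p` of `Q^h(R)`. -/
def mono (i : ℤ) (a : ∀ p : X.Supp, X.localRing p) : X.Q :=
  fun p => LaurentPolynomial.C (a p) * LaurentPolynomial.T i

/-- The homogeneous component of degree `i` of `Q^h(R)`. -/
def Qdeg (i : ℤ) : Set X.Q := Set.range (X.mono i)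

/-- The `K`-algebra homomorphism `P → Q^h(R)` with `X_k ↦ ((X_k)_p T_p)_p`. -/
def toQ : MvPolynomial (Fin (n + 1)) K →ₐ[K] X.Q :=
  MvPolynomial.aeval fun k => X.mono 1 fun p => X.germ p (MvPolynomial.X k)

lemma mono_mul (i j : ℤ) (a b : ∀ p : X.Supp, X.localRing p) :
    X.mono i a * X.mono j b = X.mono (i + j) (a * b) := by
  funext p
  change LaurentPolynomial.C (a p) * LaurentPolynomial.T i *
    (LaurentPolynomial.C (b p) * LaurentPolynomial.T j) =
    LaurentPolynomial.C (a p * b p) * LaurentPolynomial.T (i + j)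
  rw [LaurentPolynomial.T_add, map_mul]
  ring

lemma mono_one : X.mono 0 1 = 1 := by
  funext p
  change LaurentPolynomial.C (1 : X.localRing p) * LaurentPolynomial.T 0 = 1
  simp

lemma mono_add (i : ℤ) (a b : ∀ p : X.Supp, X.localRing p) :
    X.mono i a + X.mono i b = X.mono i (a + b) := by
  funext p
  change LaurentPolynomial.C (a p) * LaurentPolynomial.T i +
    LaurentPolynomial.C (b p) * LaurentPolynomial.T i =
    LaurentPolynomial.C (a p + b p) * LaurentPolynomial.T i
  rw [map_add, add_mul]

lemma mono_zero (i : ℤ) : X.mono i 0 = 0 := by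
  funext p
  change LaurentPolynomial.C (0 : X.localRing p) * LaurentPolynomial.T i = 0
  simp

lemma algebraMap_eq_mono (c : K) :
    algebraMap K X.Q c = X.mono 0 fun p => algebraMap K (X.localRing p) c := by
  funext p
  change algebraMap K (X.localRing p)[T;T⁻¹] c =
    LaurentPolynomial.C (algebraMap K (X.localRing p) c) * LaurentPolynomial.T 0
  simp only [LaurentPolynomial.T_zero, mul_one]
  rfl

/-- A homogeneous polynomial of degree `i` is sent to `(F_p T_pⁱ)_p`. -/
lemma toQ_of_isHomogeneous {i : ℕ} {F : MvPolynomial (Fin (n + 1)) K} (hF : F.IsHomogeneous i) :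
    X.toQ F = X.mono i fun p => X.germ p F := by
  have hmon : ∀ d : Fin (n + 1) →₀ ℕ, ∀ c : K,
      X.toQ (MvPolynomial.monomial d c) =
        X.mono (d.degree : ℕ) fun p => X.germ p (MvPolynomial.monomial d c) := by
    intro d c
    induction d using Finsupp.induction_linear generalizing c with
    | zero =>
      have h1 : MvPolynomial.monomial (0 : Fin (n + 1) →₀ ℕ) c = algebraMap K _ c := rfl
      rw [h1, AlgHom.commutes, algebraMap_eq_mono]
      simp
    | add d e hd he =>
      have h2 : MvPolynomial.monomial (d + e) c =
          MvPolynomial.monomial d c * MvPolynomial.monomial e (1 : K) := by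
        rw [MvPolynomial.monomial_mul, mul_one]
      rw [h2, map_mul, hd, he, mono_mul, map_add, Nat.cast_add]
      congr 1
      funext p
      exact (map_mul (X.germ p) _ _).symm
    | single k m =>
      have h3 : MvPolynomial.monomial (Finsupp.single k m) c =
          algebraMap K _ c * MvPolynomial.X k ^ m := by
        rw [MvPolynomial.algebraMap_eq, MvPolynomial.C_mul_X_pow_eq_monomial]
      have h4 : ∀ m : ℕ, X.toQ (MvPolynomial.X k ^ m) =
          X.mono m fun p => X.germ p (MvPolynomial.X k ^ m) := by
        intro m
        induction m with
        | zero =>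
          simp only [pow_zero, map_one, Nat.cast_zero]
          exact X.mono_one.symm
        | succ m ih =>
          rw [pow_succ, map_mul, ih]
          have h5 : X.toQ (MvPolynomial.X k) =
              X.mono 1 fun p => X.germ p (MvPolynomial.X k) := by
            simp [toQ]
          rw [h5, mono_mul, Nat.cast_succ]
          congr 1
          funext p
          simp
      rw [h3, map_mul, h4, AlgHom.commutes, algebraMap_eq_mono, mono_mul]
      simp only [zero_add, Finsupp.degree_single]
      congr 1
      funext p
      simp
  have hsum := F.support_sum_monomial_coeff
  have key : ∀ s : Finset (Fin (n + 1) →₀ ℕ), s ⊆ F.support →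
      X.toQ (∑ d ∈ s, MvPolynomial.monomial d (F.coeff d)) =
        X.mono i fun p => X.germ p (∑ d ∈ s, MvPolynomial.monomial d (F.coeff d)) := by
    intro s
    induction s using Finset.induction_on with
    | empty =>
      intro _
      simp only [Finset.sum_empty, map_zero]
      exact (X.mono_zero _).symm
    | insert d s hd ih =>
      intro hs
      rw [Finset.sum_insert hd, map_add, ih (fun x hx => hs (Finset.mem_insert_of_mem hx)), hmon]
      have hdeg : d.degree = i := by
        have h6 := hF (MvPolynomial.mem_support_iff.1 (hs (Finset.mem_insert_self d s)))
        rw [Finsupp.degree_eq_weight_one]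
        exact h6
      rw [hdeg, mono_add]
      congr 1
      funext p
      exact (map_add (X.germ p) _ _).symm
  have := key F.support subset_rfl
  rwa [hsum] at this

lemma toQ_eq_zero {F : MvPolynomial (Fin (n + 1)) K} (hF : F ∈ X.I) : X.toQ F = 0 := by
  rw [← MvPolynomial.sum_homogeneousComponent F, map_sum]
  refine Finset.sum_eq_zero fun i _ => ?_
  rw [X.toQ_of_isHomogeneous (MvPolynomial.homogeneousComponent_isHomogeneous i F),
    ← X.mono_zero i]
  congr 1
  funext p
  have h : MvPolynomial.homogeneousComponent i F ∈ X.I :=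
    MvPolynomial.homogeneousComponent_mem_of_mem X.homogeneous hF i
  have h' : X.toAffine (MvPolynomial.homogeneousComponent i F) = 0 :=
    Ideal.Quotient.eq_zero_iff_mem.2 (Ideal.mem_sup_left h)
  change algebraMap X.affineRing (X.localRing p) (X.toAffine _) = 0
  rw [h', map_zero]

/-- The injection `ĩ : R → Q^h(R)`, `f ↦ (f_p T_pⁱ)_p` for `f ∈ R_i`, through which `R` is
identified with its image. -/
def iota : X.R →ₐ[K] X.Q := Ideal.Quotient.liftₐ X.I X.toQ fun _ h => X.toQ_eq_zero h

instance : Algebra X.R X.Q := X.iota.toRingHom.toAlgebra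

/-- `L₀ = K[x₀, x₀⁻¹] ⊆ Q^h(R)`; here `x₀ = (T_p)_p`. -/
abbrev L0 : Subalgebra K X.Q := Algebra.adjoin K {X.mono 1 1, X.mono (-1) 1}

/-! ### The conductor -/

/-- The subring `R̃ = ∏_p 𝒪_{𝕏,p}[T_p]` of `Q^h(R)`. -/
def Rtilde : Set X.Q :=
  {q | ∀ p, ∃ f : Polynomial (X.localRing p), q p = Polynomial.toLaurent f}

/-- `f ∈ Q^h(R)` lies in the conductor `𝔉_{R̃/R} = {f ∈ R̃ | f·R̃ ⊆ R}`. -/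
def conductor : Set X.Q :=
  {f | f ∈ X.Rtilde ∧ ∀ g ∈ X.Rtilde, f * g ∈ Set.range X.iota}

/-! ### Trace maps, complementary module, different, trace -/

/-- The element `g·σ : q ↦ σ(g q)` of `Hom_{L₀}(Q^h(R), L₀)`. -/
def smulHom (g : X.Q) (σ : X.Q →ₗ[X.L0] X.L0) : X.Q →ₗ[X.L0] X.L0 :=
  σ.comp (LinearMap.mulLeft X.L0 g)

/-- `σ` is a homogeneous trace map of degree zero of `Q^h(R)/L₀`: it is homogeneous of degree
zero, and it is a `Q^h(R)`-basis of `Hom_{L₀}(Q^h(R), L₀)`, i.e. `Σ : g ↦ g·σ` is bijective. -/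
def IsHomogeneousTraceMap (σ : X.Q →ₗ[X.L0] X.L0) : Prop :=
  (∀ i : ℤ, ∀ q ∈ X.Qdeg i, (σ q : X.Q) ∈ X.Qdeg i) ∧
    Function.Bijective fun g : X.Q => X.smulHom g σ

/-- The Dedekind complementary module `𝔠^σ_𝕏 ⊆ Q^h(R)`: the set of all `g = Σ⁻¹(φ ⊗ id_{L₀})` with
`φ ∈ Hom_{K[x₀]}(R, K[x₀]) = ω_R(1)`.  As `Q^h(R) = R ⊗_{K[x₀]} L₀`, the condition
`g·σ = φ ⊗ id_{L₀}` says that `g·σ` restricts to `φ` on `R`. -/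
def complementaryModule (σ : X.Q →ₗ[X.L0] X.L0) : Submodule X.R X.Q where
  carrier := {g | ∃ φ : X.R →ₗ[X.Kx0] X.Kx0,
    ∀ r : X.R, (X.smulHom g σ (X.iota r) : X.Q) = X.iota (φ r : X.R)}
  zero_mem' := ⟨0, fun r => by simp [smulHom]⟩
  add_mem' := by
    rintro g h ⟨φ, hφ⟩ ⟨ψ, hψ⟩
    refine ⟨φ + ψ, fun r => ?_⟩
    have h1 := hφ r
    have h2 := hψ r
    simp only [smulHom, LinearMap.comp_apply, LinearMap.mulLeft_apply] at h1 h2 ⊢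
    simp [add_mul, h1, h2]
  smul_mem' := by
    rintro c g ⟨φ, hφ⟩
    refine ⟨φ.comp (LinearMap.mulLeft X.Kx0 c), fun r => ?_⟩
    have h1 := hφ (c * r)
    have h2 : c • g = X.iota c * g := rfl
    simp only [smulHom, LinearMap.comp_apply, LinearMap.mulLeft_apply] at h1 ⊢
    rw [← h1, h2, map_mul X.iota, mul_comm (X.iota c) g, mul_assoc]

/-- The Dedekind different `δ^σ_𝕏 = {f ∈ Q^h(R) | f·𝔠^σ_𝕏 ⊆ R}`. -/
def different (σ : X.Q →ₗ[X.L0] X.L0) : Set X.Q :=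
  {f | ∀ g ∈ X.complementaryModule σ, f * g ∈ Set.range X.iota}

/-- The trace `tr(𝔠^σ_𝕏) = ∑_φ φ(𝔠^σ_𝕏)`, the sum being over all `φ ∈ Hom_R(𝔠^σ_𝕏, R)`. -/
def traceIdeal (σ : X.Q →ₗ[X.L0] X.L0) : Ideal X.R :=
  ⨆ φ : X.complementaryModule σ →ₗ[X.R] X.R, LinearMap.range φ

/-- `𝕏` has minimal Dedekind different: `δ^σ_𝕏 = ⨁_{i ≥ 2 r_𝕏} R_i`. -/
def MinimalDedekindDifferent (σ : X.Q →ₗ[X.L0] X.L0) : Prop :=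
  X.different σ = X.iota '' ((⨆ (i : ℕ) (_ : 2 * X.reg ≤ i), X.Rdeg i : Submodule K X.R) : Set X.R)

/-! ### Maximal `p`-subschemes, separators and the Cayley–Bacharach property -/

/-- The local ring `𝒪_{𝕐,q} = 𝒪_{𝕏,q} / 𝔟 𝒪_{𝕏,q}` of the subscheme `𝕐 ⊆ 𝕏` given by an ideal
`𝔟` of the affine coordinate ring of `𝕏` (the zero ring if `q ∉ 𝕐`). -/
abbrev subLocalRing (𝔟 : Ideal X.affineRing) (q : X.Supp) : Type u :=
  X.localRing q ⧸ 𝔟.map (algebraMap X.affineRing (X.localRing q))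

/-- The degree of the subscheme `𝕐 ⊆ 𝕏` given by `𝔟`. -/
def subDeg (𝔟 : Ideal X.affineRing) : ℕ :=
  ∑ᶠ q : X.Supp, Module.finrank K (X.subLocalRing 𝔟 q)

/-- The subscheme `𝕐 ⊆ 𝕏` given by `𝔟` is a maximal `p`-subscheme: `𝒪_{𝕐,q} = 𝒪_{𝕏,q}` for
`q ≠ p`, and `deg 𝕐 = deg 𝕏 - dim_K κ(p)`. -/
def IsMaximalSubscheme (p : X.Supp) (𝔟 : Ideal X.affineRing) : Prop :=
  (∀ q, q ≠ p → 𝔟.map (algebraMap X.affineRing (X.localRing q)) = ⊥) ∧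
    X.subDeg 𝔟 + Module.finrank K (X.residueField p) = X.deg

/-- `s` is a nonzero socle element of `𝒪_{𝕏,p}` corresponding to the maximal `p`-subscheme given
by `𝔟`: the ideal of `∏_q 𝒪_{𝕏,q}` defining the subscheme is `⟨(0,…,0,s,0,…,0)⟩`. -/
def IsSocleElementOf (p : X.Supp) (𝔟 : Ideal X.affineRing) (s : X.localRing p) : Prop :=
  s ≠ 0 ∧ (∀ b ∈ IsLocalRing.maximalIdeal (X.localRing p), b * s = 0) ∧
    𝔟.map (algebraMap X.affineRing (X.localRing p)) = Ideal.span {s}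

open Classical in
/-- `μ(a) = min {i ∈ ℕ | (0,…,0,a T_pⁱ,0,…,0) ∈ ĩ(R)}` for `a ∈ 𝒪_{𝕏,p}`. -/
def mu (p : X.Supp) (a : X.localRing p) : ℕ :=
  sInf {i : ℕ | X.mono i (Pi.single p a) ∈ Set.range X.iota}

/-- The residue classes of the `e k` form a `K`-basis of `κ(p)`. -/
def IsResidueBasis (p : X.Supp)
    (e : Fin (Module.finrank K (X.residueField p)) → X.localRing p) : Prop :=
  ∃ b : Module.Basis (Fin (Module.finrank K (X.residueField p))) K (X.residueField p),
    ∀ k, IsLocalRing.residue (X.localRing p) (e k) = b k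

/-- `m` is the maximal degree `μ_{𝕐/𝕏}` of a minimal separator of the maximal `p`-subscheme `𝕐`
given by `𝔟`: for a socle element `s` corresponding to `𝕐` and elements `e k` whose residue
classes form a `K`-basis of `κ(p)`, it is the maximum of the degrees `μ(e k · s)` of the minimal
separators.  (The value does not depend on the choice of `s` and `e`.) -/
def IsMaxSeparatorDegree (p : X.Supp) (𝔟 : Ideal X.affineRing) (m : ℕ) : Prop :=
  ∃ s : X.localRing p, X.IsSocleElementOf p 𝔟 s ∧ ∃ e, X.IsResidueBasis p e ∧
    m = Finset.univ.sup fun k => X.mu p (e k * s)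

/-- `deg_𝕏(p) = min {μ_{𝕐/𝕏} | 𝕐 a maximal p-subscheme of 𝕏}`. -/
def pointDeg (p : X.Supp) : ℕ :=
  sInf {m : ℕ | ∃ 𝔟, X.IsMaximalSubscheme p 𝔟 ∧ X.IsMaxSeparatorDegree p 𝔟 m}

/-- `𝕏` is a Cayley–Bacharach scheme: `deg_𝕏(p) ≥ r_𝕏` for every point `p` of the support. -/
def CayleyBacharach : Prop := ∀ p : X.Supp, X.reg ≤ X.pointDeg p

end ZeroDimScheme

end

noncomputable section

attribute [local instance] MvPolynomial.gradedAlgebra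

namespace ZeroDimScheme

open MvPolynomial

variable {K : Type u} [Field K] {n : ℕ} (X : ZeroDimScheme K n)

/-! ### The affine coordinate ring -/

lemma exists_pow_idealOfVars_le :
    ∃ N, idealOfVars (Fin (n + 1)) K ^ N ≤ X.I ⊔ Ideal.span {MvPolynomial.X 0} := by
  refine Ideal.exists_pow_le_of_le_radical_of_fg ?_ (idealOfVars_fg _ _)
  rw [idealOfVars, Ideal.span_le, Ideal.radical_eq_sInf]
  rintro _ ⟨k, rfl⟩
  simp only [SetLike.mem_coe, Ideal.mem_sInf, Set.mem_ofPred_eq]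
  rintro 𝔭 ⟨hle, hp⟩
  have hX0 : (MvPolynomial.X 0 : MvPolynomial (Fin (n + 1)) K) ∈ 𝔭 :=
    hle (Ideal.mem_sup_right (Ideal.mem_span_singleton_self _))
  have hcore := hp.homogeneousCore (𝒜 := homogeneousSubmodule (Fin (n + 1)) K)
  refine Ideal.toIdeal_homogeneousCore_le (homogeneousSubmodule (Fin (n + 1)) K) 𝔭 <|
    X.avoids _ hcore (HomogeneousIdeal.isHomogeneous _) ?_ ?_ k
  · rw [← X.homogeneous.toIdeal_homogeneousCore_eq_self]
    exact Ideal.homogeneousCore_mono _ (le_sup_left.trans hle)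
  · exact Ideal.mem_homogeneousCore_of_homogeneous_of_mem ⟨1, isHomogeneous_X K 0⟩ hX0

lemma mem_of_pow_idealOfVars_mul_mem (N : ℕ) {F : MvPolynomial (Fin (n + 1)) K}
    (h : ∀ G ∈ idealOfVars (Fin (n + 1)) K ^ N, G * F ∈ X.I) : F ∈ X.I := by
  induction N generalizing F with
  | zero => simpa using h 1 (by simp)
  | succ N ih =>
    refine X.saturated F fun k => ih fun G hG => ?_
    rw [← mul_assoc]
    exact h _ (by rw [pow_succ]; exact Ideal.mul_mem_mul hG (Ideal.subset_span ⟨k, rfl⟩))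

lemma mem_of_X_zero_mul_mem {F : MvPolynomial (Fin (n + 1)) K}
    (h : MvPolynomial.X 0 * F ∈ X.I) : F ∈ X.I := by
  obtain ⟨N, hN⟩ := X.exists_pow_idealOfVars_le
  refine X.mem_of_pow_idealOfVars_mul_mem N fun G hG => ?_
  obtain ⟨a, ha, b, hb, rfl⟩ := Submodule.mem_sup.1 (hN hG)
  obtain ⟨c, rfl⟩ := Ideal.mem_span_singleton.1 hb
  rw [add_mul, mul_right_comm]
  exact X.I.add_mem (X.I.mul_mem_right _ ha) (X.I.mul_mem_right _ h)

lemma mem_of_X_zero_pow_mul_mem (k : ℕ) {F : MvPolynomial (Fin (n + 1)) K}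
    (h : MvPolynomial.X 0 ^ k * F ∈ X.I) : F ∈ X.I := by
  induction k with
  | zero => simpa using h
  | succ k ih =>
    rw [pow_succ', mul_assoc] at h
    exact ih (X.mem_of_X_zero_mul_mem h)

lemma aeval_smul_of_isHomogeneous {S : Type*} [CommRing S] [Algebra K S] {i : ℕ}
    {F : MvPolynomial (Fin (n + 1)) K} (hF : F.IsHomogeneous i) (c : S) (x : Fin (n + 1) → S) :
    aeval (fun k => c * x k) F = c ^ i * aeval x F := by
  rw [aeval_def, aeval_def, eval₂_eq, eval₂_eq, Finset.mul_sum]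
  refine Finset.sum_congr rfl fun d hd => ?_
  have hdeg : ∑ k ∈ d.support, d k = i := by
    have := hF (mem_support_iff.1 hd)
    change Finsupp.degree d = i
    rw [Finsupp.degree_eq_weight_one]
    exact this
  simp only [mul_pow, Finset.prod_mul_distrib, Finset.prod_pow_eq_pow_sum, hdeg]
  ring

/-- A homogeneous polynomial whose dehomogenization vanishes on `𝕏` lies in `I_𝕏`. -/
lemma mem_of_toAffine_eq_zero {i : ℕ} {F : MvPolynomial (Fin (n + 1)) K} (hF : F.IsHomogeneous i)
    (h : X.toAffine F = 0) : F ∈ X.I := by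
  let S := Localization.Away X.x0
  let x : Fin (n + 1) → S := fun k => algebraMap X.R S (Ideal.Quotient.mk X.I (MvPolynomial.X k))
  let c : S := IsLocalization.Away.invSelf X.x0
  have hc : c * x 0 = 1 := by
    rw [mul_comm]
    exact IsLocalization.Away.mul_invSelf X.x0
  let θ : MvPolynomial (Fin (n + 1)) K →ₐ[K] S := aeval fun k => c * x k
  have hx : aeval x = (IsScalarTower.toAlgHom K X.R S).comp (Ideal.Quotient.mkₐ K X.I) := by
    ext k
    simp [x]
  have hθ : ∀ j (G : MvPolynomial (Fin (n + 1)) K), G.IsHomogeneous j →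
      θ G = c ^ j * algebraMap X.R S (Ideal.Quotient.mk X.I G) := by
    intro j G hG
    simp only [θ]
    rw [aeval_smul_of_isHomogeneous hG, hx]
    rfl
  have hle : X.I ⊔ Ideal.span {MvPolynomial.X 0 - 1} ≤ RingHom.ker θ := by
    refine sup_le (fun G hG => ?_) ?_
    · rw [RingHom.mem_ker, ← sum_homogeneousComponent G, map_sum]
      refine Finset.sum_eq_zero fun j _ => ?_
      rw [hθ j _ (homogeneousComponent_isHomogeneous j G), Ideal.Quotient.eq_zero_iff_mem.2
        (homogeneousComponent_mem_of_mem X.homogeneous hG j), map_zero, mul_zero]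
    · rw [Ideal.span_le, Set.singleton_subset_iff, SetLike.mem_coe, RingHom.mem_ker, map_sub,
        map_one, sub_eq_zero]
      simpa [θ] using hc
  have hF0 : θ F = 0 := hle (Ideal.Quotient.eq_zero_iff_mem.1 h)
  rw [hθ i F hF] at hF0
  have hunit : IsUnit (c ^ i) := (IsUnit.of_mul_eq_one _ hc).pow i
  rw [hunit.mul_right_eq_zero] at hF0
  obtain ⟨⟨_, k, rfl⟩, hk⟩ := (IsLocalization.map_eq_zero_iff (Submonoid.powers X.x0) S _).1 hF0
  refine X.mem_of_X_zero_pow_mul_mem k (Ideal.Quotient.eq_zero_iff_mem.1 ?_)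
  rw [map_mul, map_pow]
  exact hk

lemma toAffine_surjective : Function.Surjective X.toAffine := Ideal.Quotient.mk_surjective

lemma toAffine_X_zero : X.toAffine (MvPolynomial.X 0) = 1 := by
  rw [← sub_eq_zero, ← map_one X.toAffine, ← map_sub]
  exact Ideal.Quotient.eq_zero_iff_mem.2 (Ideal.mem_sup_right (Ideal.mem_span_singleton_self _))

lemma toAffine_eq_zero {F : MvPolynomial (Fin (n + 1)) K} (hF : F ∈ X.I) : X.toAffine F = 0 :=
  Ideal.Quotient.eq_zero_iff_mem.2 (Ideal.mem_sup_left hF)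

/-- The dehomogenizations of the forms of degree `i`. -/
def affineFil (i : ℕ) : Submodule K X.affineRing :=
  (homogeneousSubmodule (Fin (n + 1)) K i).map X.toAffine.toLinearMap

lemma affineFil_mono : Monotone X.affineFil := by
  refine monotone_nat_of_le_succ fun i => ?_
  rintro _ ⟨F, hF, rfl⟩
  refine ⟨MvPolynomial.X 0 * F, ?_, ?_⟩
  · exact add_comm 1 i ▸ (isHomogeneous_X K (0 : Fin (n + 1))).mul hF
  · simp [toAffine_X_zero]

lemma homogeneousComponent_succ_X_zero_mul (i : ℕ) (G : MvPolynomial (Fin (n + 1)) K) :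
    homogeneousComponent (i + 1) (MvPolynomial.X 0 * G) =
      MvPolynomial.X 0 * homogeneousComponent i G := by
  have hmem : ∀ j, MvPolynomial.X 0 * homogeneousComponent j G ∈
      homogeneousSubmodule (Fin (n + 1)) K (j + 1) := fun j =>
    add_comm 1 j ▸ (isHomogeneous_X K (0 : Fin (n + 1))).mul
      (homogeneousComponent_isHomogeneous j G)
  conv_lhs => rw [← sum_homogeneousComponent G, Finset.mul_sum, map_sum]
  simp only [homogeneousComponent_of_mem (hmem _), Nat.add_right_cancel_iff]
  rw [Finset.sum_ite_eq]
  split_ifs with h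
  · rfl
  · rw [homogeneousComponent_eq_zero, mul_zero]
    simpa using h

lemma exists_affineFil_eq_top : ∃ N, X.affineFil N = ⊤ := by
  obtain ⟨N, hN⟩ := X.exists_pow_idealOfVars_le
  have hstep : ∀ i, N ≤ i + 1 → X.affineFil (i + 1) ≤ X.affineFil i := by
    rintro i hi _ ⟨F, hF, rfl⟩
    have hFm : F ∈ idealOfVars (Fin (n + 1)) K ^ N := by
      rw [mem_pow_idealOfVars_iff]
      intro d hd
      have := hF (mem_support_iff.1 hd)
      rw [Finsupp.degree_eq_weight_one]
      exact hi.trans this.ge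
    obtain ⟨a, ha, b, hb, hab⟩ := Submodule.mem_sup.1 (hN hFm)
    obtain ⟨c, rfl⟩ := Ideal.mem_span_singleton.1 hb
    refine ⟨homogeneousComponent i c, homogeneousComponent_isHomogeneous i c, ?_⟩
    have h1 := congrArg (homogeneousComponent (i + 1)) hab
    rw [map_add, homogeneousComponent_succ_X_zero_mul, homogeneousComponent_eq_self hF] at h1
    change X.toAffine _ = X.toAffine _
    rw [← h1, map_add, map_mul, toAffine_X_zero, one_mul,
      X.toAffine_eq_zero (homogeneousComponent_mem_of_mem X.homogeneous ha _), zero_add]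
  have hdown : ∀ k, X.affineFil (N + k) ≤ X.affineFil N := by
    intro k
    induction k with
    | zero => exact le_rfl
    | succ k ih => exact (hstep (N + k) (by omega)).trans ih
  refine ⟨N, eq_top_iff.2 fun a _ => ?_⟩
  obtain ⟨F, rfl⟩ := X.toAffine_surjective a
  rw [← sum_homogeneousComponent F, map_sum]
  refine Submodule.sum_mem _ fun j _ => ?_
  exact hdown j (X.affineFil_mono (Nat.le_add_left j N)
    ⟨_, homogeneousComponent_isHomogeneous j F, rfl⟩)

instance : Module.Finite K X.affineRing := by
  obtain ⟨N, hN⟩ := X.exists_affineFil_eq_top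
  refine ⟨?_⟩
  rw [← hN]
  exact (homogeneousSubmodule_fg _ _ N).map _

instance : IsArtinianRing X.affineRing := IsArtinianRing.of_finite K _

/-- The Chinese remainder isomorphism of the affine coordinate ring with the product of the local
rings. -/
def localEquiv : X.affineRing ≃ₐ[K] ∀ p : X.Supp, X.localRing p :=
  (MaximalSpectrum.toPiLocalizationEquiv X.affineRing).restrictScalars K

lemma localEquiv_apply (a : X.affineRing) (p : X.Supp) :
    X.localEquiv a p = algebraMap X.affineRing (X.localRing p) a := rfl

lemma localEquiv_toAffine (F : MvPolynomial (Fin (n + 1)) K) (p : X.Supp) :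
    X.localEquiv (X.toAffine F) p = X.germ p F := rfl

instance : Module.Finite K (∀ p : X.Supp, X.localRing p) :=
  Module.Finite.equiv X.localEquiv.toLinearEquiv

instance (p : X.Supp) : Module.Finite K (X.localRing p) :=
  Module.Finite.of_surjective (LinearMap.proj (R := K) (φ := fun p : X.Supp => X.localRing p) p)
    (Function.surjective_eval p)

lemma deg_eq_finrank : X.deg = Module.finrank K (∀ p : X.Supp, X.localRing p) := by
  have := Fintype.ofFinite X.Supp
  rw [deg, finsum_eq_sum_of_fintype, Module.finrank_pi_fintype]

end ZeroDimScheme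

namespace ZeroDimScheme

open MvPolynomial

variable {K : Type u} [Field K] {n : ℕ} (X : ZeroDimScheme K n)

/-! ### Homogeneous components of elements of the ring of quotients -/

/-- The coefficient `(q_{p,i})_p` of `(T_pⁱ)_p` in `q ∈ Q^h(R)`. -/
def coeff (i : ℤ) : X.Q →ₗ[K] ∀ p : X.Supp, X.localRing p where
  toFun q p := (q p).coeff i
  map_add' _ _ := rfl
  map_smul' _ _ := rfl

lemma coeff_apply (i : ℤ) (q : X.Q) (p : X.Supp) : X.coeff i q p = (q p).coeff i := rfl

variable {X} in
lemma Q_ext {q q' : X.Q} (h : ∀ i, X.coeff i q = X.coeff i q') : q = q' :=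
  funext fun p => LaurentPolynomial.ext fun i => congrFun (h i) p

lemma mono_apply (i : ℤ) (a : ∀ p : X.Supp, X.localRing p) (p : X.Supp) :
    X.mono i a p = AddMonoidAlgebra.single i (a p) :=
  (LaurentPolynomial.single_eq_C_mul_T (a p) i).symm

lemma coeff_mono (i j : ℤ) (a : ∀ p : X.Supp, X.localRing p) :
    X.coeff j (X.mono i a) = if j = i then a else 0 := by
  funext p
  rw [coeff_apply, mono_apply, AddMonoidAlgebra.coeff_single, Finsupp.single_apply]
  split_ifs with h1 h2 h2
  · rfl
  · exact absurd h1.symm h2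
  · exact absurd h2.symm h1
  · rfl

@[simp] lemma coeff_mono_self (i : ℤ) (a : ∀ p : X.Supp, X.localRing p) :
    X.coeff i (X.mono i a) = a := by rw [coeff_mono, if_pos rfl]

lemma coeff_mono_of_ne {i j : ℤ} (h : j ≠ i) (a : ∀ p : X.Supp, X.localRing p) :
    X.coeff j (X.mono i a) = 0 := by rw [coeff_mono, if_neg h]

lemma coeff_mono_mul (i j : ℤ) (a : ∀ p : X.Supp, X.localRing p) (q : X.Q) :
    X.coeff j (X.mono i a * q) = a * X.coeff (j - i) q := by
  funext p
  have h : (X.mono i a * q) p = AddMonoidAlgebra.single i (a p) * q p := by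
    rw [← mono_apply]; rfl
  rw [coeff_apply, h, AddMonoidAlgebra.coeff_single_mul_eq_mul_coeff (j - i)
    (fun k _ => by rw [eq_sub_iff_add_eq']; )]
  rfl

/-- `a ↦ (a_p T_pⁱ)_p` as a linear map. -/
def monoₗ (i : ℤ) : (∀ p : X.Supp, X.localRing p) →ₗ[K] X.Q where
  toFun := X.mono i
  map_add' a b := (X.mono_add i a b).symm
  map_smul' c a := by
    rw [RingHom.id_apply, Algebra.smul_def, Algebra.smul_def, algebraMap_eq_mono, mono_mul,
      zero_add]
    rfl

lemma monoₗ_apply (i : ℤ) (a : ∀ p : X.Supp, X.localRing p) : X.monoₗ i a = X.mono i a := rfl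

lemma exists_finset_coeff_eq_zero (q : X.Q) :
    ∃ s : Finset ℤ, ∀ i, i ∉ s → X.coeff i q = 0 := by
  classical
  have := Fintype.ofFinite X.Supp
  refine ⟨Finset.univ.biUnion fun p => (q p).coeff.support, fun i hi => funext fun p => ?_⟩
  by_contra h
  exact hi (Finset.mem_biUnion.2 ⟨p, Finset.mem_univ p, Finsupp.mem_support_iff.2 h⟩)

lemma exists_eq_sum_mono (q : X.Q) : ∃ s : Finset ℤ, q = ∑ i ∈ s, X.mono i (X.coeff i q) := by
  obtain ⟨s, hs⟩ := X.exists_finset_coeff_eq_zero q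
  refine ⟨s, Q_ext fun j => ?_⟩
  rw [map_sum]
  simp only [coeff_mono]
  rw [Finset.sum_ite_eq]
  split_ifs with h
  · rfl
  · exact hs j h

lemma coeff_mul_eq_zero {q q' : X.Q} {a b : ℤ} (hq : ∀ i < a, X.coeff i q = 0)
    (hq' : ∀ i < b, X.coeff i q' = 0) : ∀ i < a + b, X.coeff i (q * q') = 0 := by
  intro i hi
  obtain ⟨s, hs⟩ := X.exists_eq_sum_mono q
  rw [hs, Finset.sum_mul, map_sum]
  refine Finset.sum_eq_zero fun j _ => ?_
  rw [coeff_mono_mul]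
  rcases lt_or_ge j a with h | h
  · rw [hq j h, zero_mul]
  · rw [hq' (i - j) (by omega), mul_zero]

lemma mem_Rtilde_iff {q : X.Q} : q ∈ X.Rtilde ↔ ∀ i < 0, X.coeff i q = 0 := by
  constructor
  · intro h i hi
    funext p
    obtain ⟨f, hf⟩ := h p
    rw [coeff_apply, hf]
    by_contra hne
    have hmem := Finsupp.mem_support_iff.2 hne
    rw [LaurentPolynomial.support_coeff_toLaurent] at hmem
    obtain ⟨k, -, rfl⟩ := Finset.mem_map.1 hmem
    exact absurd hi (by simp)
  · intro h p
    obtain ⟨s, hs⟩ := X.exists_eq_sum_mono q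
    have hsub : ∀ i ∈ s, ∃ f : Polynomial (X.localRing p),
        X.mono i (X.coeff i q) p = Polynomial.toLaurent f := by
      intro i _
      rcases lt_or_ge i 0 with hi | hi
      · exact ⟨0, by rw [h i hi, mono_zero, map_zero]; rfl⟩
      · lift i to ℕ using hi
        exact ⟨Polynomial.C (X.coeff i q p) * Polynomial.X ^ i,
          (Polynomial.toLaurent_C_mul_X_pow i _).symm⟩
    choose! f hf using hsub
    refine ⟨∑ i ∈ s, f i, ?_⟩
    rw [map_sum, ← Finset.sum_congr rfl hf]
    have := congrFun hs p
    rw [this]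
    exact Finset.sum_apply p s _

lemma exists_coeff_eq_algebraMap {x : X.Q} (hx : x ∈ X.L0) (i : ℤ) :
    ∃ c : K, X.coeff i x = algebraMap K _ c := by
  have hcl : ∀ y ∈ Submonoid.closure {X.mono 1 1, X.mono (-1) 1}, ∃ j, y = X.mono j 1 := by
    intro y hy
    induction hy using Submonoid.closure_induction with
    | mem y hy =>
      rcases hy with rfl | rfl
      exacts [⟨1, rfl⟩, ⟨-1, rfl⟩]
    | one => exact ⟨0, X.mono_one.symm⟩
    | mul y z _ _ hy hz =>
      obtain ⟨j, rfl⟩ := hy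
      obtain ⟨k, rfl⟩ := hz
      exact ⟨j + k, by rw [mono_mul, mul_one]⟩
  have hx' : x ∈ Submodule.span K
      (Submonoid.closure {X.mono 1 1, X.mono (-1) 1} : Set X.Q) := by
    rw [← Algebra.adjoin_eq_span]
    exact hx
  have hle : Submodule.span K (Submonoid.closure {X.mono 1 1, X.mono (-1) 1} : Set X.Q) ≤
      (LinearMap.range (Algebra.linearMap K (∀ p : X.Supp, X.localRing p))).comap
        (X.coeff i) := by
    rw [Submodule.span_le]
    intro y hy
    obtain ⟨j, rfl⟩ := hcl y hy
    rw [SetLike.mem_coe, Submodule.mem_comap, coeff_mono]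
    split_ifs
    · exact ⟨1, map_one (algebraMap K _)⟩
    · exact Submodule.zero_mem _
  obtain ⟨c, hc⟩ := hle hx'
  exact ⟨c, hc.symm⟩

/-! ### The filtration of the ring of global sections -/

/-- The elements `a` with `(a_p T_pⁱ)_p ∈ R`. -/
def Fil (i : ℤ) : Submodule K (∀ p : X.Supp, X.localRing p) :=
  (LinearMap.range X.iota.toLinearMap).comap (X.monoₗ i)

lemma mem_Fil {i : ℤ} {a : ∀ p : X.Supp, X.localRing p} :
    a ∈ X.Fil i ↔ X.mono i a ∈ Set.range X.iota := Iff.rfl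

lemma iota_mk (F : MvPolynomial (Fin (n + 1)) K) :
    X.iota (Ideal.Quotient.mk X.I F) = X.toQ F := rfl

lemma toQ_homogeneousComponent (i : ℕ) (F : MvPolynomial (Fin (n + 1)) K) :
    X.toQ (homogeneousComponent i F) =
      X.mono i (X.localEquiv (X.toAffine (homogeneousComponent i F))) :=
  X.toQ_of_isHomogeneous (homogeneousComponent_isHomogeneous i F)

lemma coeff_toQ_natCast (i : ℕ) (F : MvPolynomial (Fin (n + 1)) K) :
    X.coeff i (X.toQ F) = X.localEquiv (X.toAffine (homogeneousComponent i F)) := by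
  conv_lhs => rw [← sum_homogeneousComponent F, map_sum, map_sum]
  simp only [toQ_homogeneousComponent, coeff_mono, Nat.cast_inj]
  rw [Finset.sum_ite_eq]
  split_ifs with h
  · rfl
  · rw [homogeneousComponent_eq_zero, map_zero, map_zero]
    simpa using h

lemma coeff_toQ_of_neg {i : ℤ} (hi : i < 0) (F : MvPolynomial (Fin (n + 1)) K) :
    X.coeff i (X.toQ F) = 0 := by
  rw [← sum_homogeneousComponent F, map_sum, map_sum]
  refine Finset.sum_eq_zero fun j _ => ?_
  rw [toQ_homogeneousComponent, coeff_mono_of_ne _ (by omega)]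

lemma Fil_of_neg {i : ℤ} (hi : i < 0) : X.Fil i = ⊥ := by
  rw [eq_bot_iff]
  rintro a ⟨f, hf⟩
  obtain ⟨F, rfl⟩ := Ideal.Quotient.mk_surjective f
  have := congrArg (X.coeff i) hf
  rw [monoₗ_apply, coeff_mono_self] at this
  exact this.symm.trans (X.coeff_toQ_of_neg hi F)

lemma Fil_natCast (i : ℕ) : X.Fil i = (X.affineFil i).map X.localEquiv.toLinearMap := by
  ext a
  constructor
  · rintro ⟨f, hf⟩
    obtain ⟨F, rfl⟩ := Ideal.Quotient.mk_surjective f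
    have := congrArg (X.coeff i) hf
    rw [monoₗ_apply, coeff_mono_self] at this
    exact ⟨_, ⟨_, homogeneousComponent_isHomogeneous i F, rfl⟩,
      (X.coeff_toQ_natCast i F).symm.trans this⟩
  · rintro ⟨_, ⟨F, hF, rfl⟩, rfl⟩
    exact ⟨Ideal.Quotient.mk X.I F, X.toQ_of_isHomogeneous hF⟩

lemma Fil_mono : Monotone X.Fil := by
  intro i j hij
  rcases lt_or_ge i 0 with hi | hi
  · rw [X.Fil_of_neg hi]
    exact bot_le
  · lift i to ℕ using hi
    lift j to ℕ using (by omega)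
    rw [Fil_natCast, Fil_natCast]
    exact Submodule.map_mono (X.affineFil_mono (by exact_mod_cast hij))

lemma coeff_iota_mem (i : ℤ) (f : X.R) : X.coeff i (X.iota f) ∈ X.Fil i := by
  obtain ⟨F, rfl⟩ := Ideal.Quotient.mk_surjective f
  rw [iota_mk]
  rcases lt_or_ge i 0 with hi | hi
  · rw [X.coeff_toQ_of_neg hi]
    exact Submodule.zero_mem _
  · lift i to ℕ using hi
    rw [coeff_toQ_natCast, Fil_natCast]
    exact ⟨_, ⟨_, homogeneousComponent_isHomogeneous i F, rfl⟩, rfl⟩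

lemma mem_range_iota_iff {q : X.Q} : q ∈ Set.range X.iota ↔ ∀ i, X.coeff i q ∈ X.Fil i := by
  constructor
  · rintro ⟨f, rfl⟩ i
    exact X.coeff_iota_mem i f
  · intro h
    obtain ⟨s, hs⟩ := X.exists_eq_sum_mono q
    rw [hs]
    exact Submodule.sum_mem (LinearMap.range X.iota.toLinearMap) fun i _ => h i

lemma iota_injective : Function.Injective X.iota := by
  rw [injective_iff_map_eq_zero]
  intro f hf
  obtain ⟨F, rfl⟩ := Ideal.Quotient.mk_surjective f
  refine Ideal.Quotient.eq_zero_iff_mem.2 ?_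
  rw [mem_iff_homogeneousComponent_mem X.homogeneous]
  intro i
  refine X.mem_of_toAffine_eq_zero (homogeneousComponent_isHomogeneous i F) ?_
  have := X.coeff_toQ_natCast i F
  rw [← iota_mk, hf, map_zero] at this
  exact (map_eq_zero_iff X.localEquiv X.localEquiv.injective).1 this.symm

lemma iota_of_mem_Rdeg {i : ℕ} {f : X.R} (hf : f ∈ X.Rdeg i) :
    X.iota f = X.mono i (X.coeff i (X.iota f)) := by
  obtain ⟨F, hF, rfl⟩ := hf
  have h : X.iota ((Ideal.Quotient.mkₐ K X.I).toLinearMap F) = X.mono i fun p => X.germ p F :=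
    X.toQ_of_isHomogeneous hF
  rw [h, coeff_mono_self]

lemma exists_mem_Rdeg_iota_eq {i : ℕ} {a : ∀ p : X.Supp, X.localRing p} (ha : a ∈ X.Fil i) :
    ∃ f ∈ X.Rdeg i, X.iota f = X.mono i a := by
  rw [Fil_natCast] at ha
  obtain ⟨_, ⟨F, hF, rfl⟩, rfl⟩ := ha
  exact ⟨_, ⟨F, hF, rfl⟩, X.toQ_of_isHomogeneous hF⟩

lemma finrank_Rdeg (i : ℕ) : Module.finrank K (X.Rdeg i) = Module.finrank K (X.Fil i) := by
  have hmap : (X.Rdeg i).map X.iota.toLinearMap = (X.Fil i).map (X.monoₗ i) := by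
    ext q
    constructor
    · rintro ⟨f, hf, rfl⟩
      exact ⟨_, X.coeff_iota_mem i f, (X.iota_of_mem_Rdeg hf).symm⟩
    · rintro ⟨a, ha, rfl⟩
      obtain ⟨f, hf, h⟩ := X.exists_mem_Rdeg_iota_eq ha
      exact ⟨f, hf, h⟩
  have hmono : Function.Injective (X.monoₗ i) := fun a b hab => by
    have := congrArg (X.coeff i) hab
    simpa only [monoₗ_apply, coeff_mono_self] using this
  rw [(Submodule.equivMapOfInjective X.iota.toLinearMap X.iota_injective (X.Rdeg i)).finrank_eq,
    hmap, ← (Submodule.equivMapOfInjective (X.monoₗ i) hmono (X.Fil i)).finrank_eq]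

lemma Fil_eq_top {i : ℤ} (hi : (X.reg : ℤ) ≤ i) : X.Fil i = ⊤ := by
  have hne : {i : ℕ | ∀ j, i ≤ j → Module.finrank K (X.Rdeg j) = X.deg}.Nonempty := by
    obtain ⟨N, hN⟩ := X.exists_affineFil_eq_top
    refine ⟨N, fun j hj => ?_⟩
    have htop : X.Fil j = ⊤ := by
      rw [Fil_natCast, eq_top_iff.2 (hN.symm.le.trans (X.affineFil_mono hj)), Submodule.map_top]
      exact LinearMap.range_eq_top.2 X.localEquiv.surjective
    rw [finrank_Rdeg, htop, finrank_top, deg_eq_finrank]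
  lift i to ℕ using (by omega)
  have := Nat.sInf_mem hne i (by exact_mod_cast hi)
  rw [finrank_Rdeg, deg_eq_finrank] at this
  exact Submodule.eq_top_of_finrank_eq this

lemma mem_range_iota_of_coeff_eq_zero {q : X.Q} (h : ∀ i < (X.reg : ℤ), X.coeff i q = 0) :
    q ∈ Set.range X.iota := by
  rw [mem_range_iota_iff]
  intro i
  rcases lt_or_ge i (X.reg : ℤ) with hi | hi
  · rw [h i hi]
    exact Submodule.zero_mem _
  · rw [X.Fil_eq_top hi]
    exact Submodule.mem_top

lemma mem_iota_image_iSup_Rdeg_iff {m : ℕ} (hm : X.reg ≤ m) {q : X.Q} :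
    q ∈ X.iota '' ((⨆ (i : ℕ) (_ : m ≤ i), X.Rdeg i : Submodule K X.R) : Set X.R) ↔
      ∀ i < (m : ℤ), X.coeff i q = 0 := by
  constructor
  · rintro ⟨f, hf, rfl⟩ i hi
    have hle : (⨆ (i : ℕ) (_ : m ≤ i), X.Rdeg i : Submodule K X.R) ≤
        LinearMap.ker ((X.coeff i).comp X.iota.toLinearMap) := by
      refine iSup₂_le fun j hj f hf => ?_
      have h := X.iota_of_mem_Rdeg hf
      change X.coeff i (X.iota f) = 0
      rw [h, coeff_mono_of_ne _ (by omega)]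
    exact hle hf
  · intro h
    obtain ⟨s, hs⟩ := X.exists_eq_sum_mono q
    have hq : q ∈ (⨆ (i : ℕ) (_ : m ≤ i), X.Rdeg i : Submodule K X.R).map X.iota.toLinearMap := by
      rw [hs]
      refine Submodule.sum_mem _ fun i _ => ?_
      rcases lt_or_ge i (m : ℤ) with hi | hi
      · rw [h i hi, mono_zero]
        exact Submodule.zero_mem _
      · lift i to ℕ using (by omega)
        obtain ⟨f, hf, hfq⟩ := X.exists_mem_Rdeg_iota_eq (i := i) (a := X.coeff i q)
          (by rw [X.Fil_eq_top (by omega)]; exact Submodule.mem_top)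
        exact ⟨f, (le_iSup₂_of_le (f := fun (i : ℕ) (_ : m ≤ i) => X.Rdeg i) i
          (by exact_mod_cast hi) le_rfl) hf, hfq⟩
    exact hq

end ZeroDimScheme

namespace ZeroDimScheme

variable {K : Type u} [Field K] {n : ℕ} (X : ZeroDimScheme K n)

/-! ### The degree zero part of a homogeneous trace map -/

/-- `τ` is the degree zero part of the homogeneous trace map `σ`: it satisfies
`σ((a_p T_pⁱ)_p) = τ(a) x₀ⁱ`, and the form `(a, b) ↦ τ(ab)` is nondegenerate. -/
structure IsTraceForm (σ : X.Q →ₗ[X.L0] X.L0) (τ : (∀ p : X.Supp, X.localRing p) →ₗ[K] K) :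
    Prop where
  coeff_trace : ∀ j q, X.coeff j (σ q : X.Q) = algebraMap K _ (τ (X.coeff j q))
  eq_zero : ∀ a, (∀ b, τ (a * b) = 0) → a = 0

lemma mono_one_mem_L0 (i : ℤ) : X.mono i 1 ∈ X.L0 := by
  have hpow : ∀ (j : ℤ) (k : ℕ), X.mono j 1 ^ k = X.mono (k * j) 1 := by
    intro j k
    induction k with
    | zero => simpa using X.mono_one.symm
    | succ k ih => rw [pow_succ, ih, mono_mul, mul_one]; congr 1; push_cast; ring
  obtain ⟨k, rfl | rfl⟩ := i.eq_nat_or_neg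
  · have := X.L0.pow_mem (Algebra.subset_adjoin (Set.mem_insert (X.mono 1 1) _)) k
    rwa [hpow, mul_one] at this
  · have := X.L0.pow_mem (Algebra.subset_adjoin
      (Set.mem_insert_of_mem (X.mono 1 1) (Set.mem_singleton (X.mono (-1) 1)))) k
    rwa [hpow, mul_neg_one] at this

lemma coe_map_mul_of_mem_L0 (σ : X.Q →ₗ[X.L0] X.L0) {c : X.Q} (hc : c ∈ X.L0) (q : X.Q) :
    (σ (c * q) : X.Q) = c * σ q :=
  congrArg Subtype.val (σ.map_smul ⟨c, hc⟩ q)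

/-- The trace map `σ` as a `K`-linear map with values in `Q^h(R)`. -/
def traceₗ (σ : X.Q →ₗ[X.L0] X.L0) : X.Q →ₗ[K] X.Q where
  toFun q := σ q
  map_add' q q' := by simp
  map_smul' c q := by
    rw [RingHom.id_apply, Algebra.smul_def, Algebra.smul_def]
    exact X.coe_map_mul_of_mem_L0 σ (X.L0.algebraMap_mem c) q

lemma traceₗ_apply (σ : X.Q →ₗ[X.L0] X.L0) (q : X.Q) : X.traceₗ σ q = σ q := rfl

variable {X} in
lemma IsHomogeneousTraceMap.exists_isTraceForm {σ : X.Q →ₗ[X.L0] X.L0}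
    (hσ : X.IsHomogeneousTraceMap σ) : ∃ τ, X.IsTraceForm σ τ := by
  obtain ⟨ρ, hρ⟩ : ∃ ρ : (∀ p : X.Supp, X.localRing p) →ₗ[K] K,
      ∀ c : K, algebraMap K (∀ p : X.Supp, X.localRing p) (ρ (algebraMap K _ c)) =
        algebraMap K _ c := by
    rcases subsingleton_or_nontrivial (∀ p : X.Supp, X.localRing p) with h | h
    · exact ⟨0, fun c => Subsingleton.elim _ _⟩
    · obtain ⟨ρ, hρ⟩ := (Algebra.linearMap K
        (∀ p : X.Supp, X.localRing p)).exists_leftInverse_of_injective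
        (LinearMap.ker_eq_bot.2 (FaithfulSMul.algebraMap_injective K _))
      exact ⟨ρ, fun c => congrArg _ (LinearMap.congr_fun hρ c)⟩
  let τ : (∀ p : X.Supp, X.localRing p) →ₗ[K] K :=
    ρ ∘ₗ X.coeff 0 ∘ₗ X.traceₗ σ ∘ₗ X.monoₗ 0
  have h0 : ∀ a, (σ (X.mono 0 a) : X.Q) = X.mono 0 (algebraMap K _ (τ a)) := by
    intro a
    obtain ⟨b, hb⟩ := hσ.1 0 _ ⟨a, rfl⟩
    obtain ⟨c, hc⟩ := X.exists_coeff_eq_algebraMap (σ (X.mono 0 a)).2 0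
    have hτ : τ a = ρ (X.coeff 0 (σ (X.mono 0 a) : X.Q)) := rfl
    rw [hτ, hc, hρ, ← hc, ← hb, coeff_mono_self]
  have hi : ∀ i a, (σ (X.mono i a) : X.Q) = X.mono i (algebraMap K _ (τ a)) := by
    intro i a
    have hmono : ∀ b, X.mono i b = X.mono i 1 * X.mono 0 b := fun b => by
      rw [mono_mul, add_zero, one_mul]
    rw [hmono, X.coe_map_mul_of_mem_L0 σ (X.mono_one_mem_L0 i), h0, ← hmono]
  have hcoeff : ∀ j q, X.coeff j (σ q : X.Q) = algebraMap K _ (τ (X.coeff j q)) := by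
    intro j q
    obtain ⟨s, hs⟩ := X.exists_eq_sum_mono q
    have hlhs : X.coeff j (σ q : X.Q) =
        ∑ i ∈ s, X.coeff j (X.mono i (algebraMap K _ (τ (X.coeff i q)))) := by
      rw [← traceₗ_apply]
      conv_lhs => rw [hs]
      rw [map_sum, map_sum]
      exact Finset.sum_congr rfl fun i _ => congrArg _ (hi i _)
    have hrhs : X.coeff j q = ∑ i ∈ s, X.coeff j (X.mono i (X.coeff i q)) := by
      conv_lhs => rw [hs]
      rw [map_sum]
    rw [hlhs, hrhs, map_sum, map_sum]
    refine Finset.sum_congr rfl fun i _ => ?_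
    rw [coeff_mono, coeff_mono]
    split_ifs
    · rfl
    · rw [map_zero, map_zero]
  refine ⟨τ, hcoeff, fun a ha => ?_⟩
  have hzero : X.mono 0 a = 0 := by
    refine hσ.2.1 (LinearMap.ext fun q => Subtype.ext (Q_ext fun j => ?_))
    change X.coeff j (σ (X.mono 0 a * q) : X.Q) = X.coeff j (σ (0 * q) : X.Q)
    rw [hcoeff, hcoeff, coeff_mono_mul, ha, zero_mul, map_zero, map_zero, map_zero, map_zero]
  rw [← X.coeff_mono_self 0 a, hzero, map_zero]

variable {X} {σ : X.Q →ₗ[X.L0] X.L0} {τ : (∀ p : X.Supp, X.localRing p) →ₗ[K] K}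

/-- The form `(a, b) ↦ τ(ab)`. -/
def traceBilin (τ : (∀ p : X.Supp, X.localRing p) →ₗ[K] K) :
    LinearMap.BilinForm K (∀ p : X.Supp, X.localRing p) :=
  (LinearMap.mul K _).compr₂ τ

lemma traceBilin_apply (τ : (∀ p : X.Supp, X.localRing p) →ₗ[K] K)
    (a b : ∀ p : X.Supp, X.localRing p) : traceBilin τ a b = τ (a * b) := rfl

lemma traceBilin_isRefl (τ : (∀ p : X.Supp, X.localRing p) →ₗ[K] K) :
    (traceBilin τ).IsRefl := fun a b h => by
  rw [traceBilin_apply] at h ⊢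
  rwa [mul_comm]

lemma trace_eq_zero_of_algebraMap_eq_zero {a : ∀ p : X.Supp, X.localRing p}
    (h : algebraMap K (∀ p : X.Supp, X.localRing p) (τ a) = 0) : τ a = 0 := by
  rcases subsingleton_or_nontrivial (∀ p : X.Supp, X.localRing p) with hs | hs
  · rw [Subsingleton.elim a 0, map_zero]
  · exact (map_eq_zero_iff _ (FaithfulSMul.algebraMap_injective K _)).1 h

lemma iota_mem_L0 (k : X.Kx0) : X.iota k ∈ X.L0 := by
  have hle : X.Kx0 ≤ X.L0.comap X.iota := by
    refine Algebra.adjoin_le (Set.singleton_subset_iff.2 (Algebra.subset_adjoin ?_))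
    left
    have hh := X.toQ_of_isHomogeneous (MvPolynomial.isHomogeneous_X K (0 : Fin (n + 1)))
    refine hh.trans (congrArg _ (funext fun p => ?_))
    rw [← localEquiv_toAffine, toAffine_X_zero, map_one]
  exact hle k.2

namespace IsTraceForm

lemma nondegenerate (hτ : X.IsTraceForm σ τ) : (traceBilin τ).Nondegenerate :=
  (traceBilin_isRefl τ).nondegenerate_iff_separatingLeft.2 hτ.eq_zero

lemma orthogonal_orthogonal (hτ : X.IsTraceForm σ τ)
    (W : Submodule K (∀ p : X.Supp, X.localRing p)) :
    (traceBilin τ).orthogonal ((traceBilin τ).orthogonal W) = W :=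
  LinearMap.BilinForm.orthogonal_orthogonal hτ.nondegenerate (traceBilin_isRefl τ) W

lemma exists_ne_zero_of_ne_top (hτ : X.IsTraceForm σ τ)
    {W : Submodule K (∀ p : X.Supp, X.localRing p)} (hW : W ≠ ⊤) :
    ∃ b ≠ 0, ∀ w ∈ W, τ (w * b) = 0 := by
  have hne : (traceBilin τ).orthogonal W ≠ ⊥ := by
    intro h
    rw [← hτ.orthogonal_orthogonal W, h, LinearMap.BilinForm.orthogonal_bot] at hW
    exact hW rfl
  obtain ⟨b, hb, hb0⟩ := Submodule.exists_mem_ne_zero_of_ne_bot hne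
  exact ⟨b, hb0, hb⟩

/-! ### The complementary module -/

lemma exists_mem_Kx0 (hτ : X.IsTraceForm σ τ) {q : X.Q} (h : ∀ i < 0, τ (X.coeff i q) = 0) :
    ∃ y : X.Kx0, X.iota y = σ q := by
  have hmem : (σ q : X.Q) ∈ X.Kx0.toSubmodule.map X.iota.toLinearMap := by
    obtain ⟨s, hs⟩ := X.exists_eq_sum_mono (σ q : X.Q)
    rw [hs]
    refine Submodule.sum_mem _ fun i _ => ?_
    rw [hτ.coeff_trace]
    rcases lt_or_ge i 0 with hi | hi
    · rw [h i hi, map_zero, mono_zero]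
      exact Submodule.zero_mem _
    · lift i to ℕ using hi
      refine ⟨algebraMap K _ (τ (X.coeff i q)) * X.x0 ^ i, Subalgebra.mul_mem _
        (Subalgebra.algebraMap_mem _ _) 
          (Subalgebra.pow_mem _ (Algebra.self_mem_adjoin_singleton K _) _), ?_⟩
      have hx : ∀ k : ℕ, X.iota (X.x0 ^ k) = X.mono k 1 := fun k => by
        have hh := X.toQ_of_isHomogeneous (MvPolynomial.isHomogeneous_X_pow (R := K)
          (0 : Fin (n + 1)) k)
        rw [← iota_mk, map_pow] at hh
        refine hh.trans (congrArg _ (funext fun p => ?_))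
        rw [map_pow, ← localEquiv_toAffine, toAffine_X_zero, map_one, Pi.one_apply, one_pow]
      change X.iota (algebraMap K X.R (τ (X.coeff i q)) * X.x0 ^ i) = _
      rw [map_mul, AlgHom.commutes, hx, algebraMap_eq_mono, mono_mul, zero_add, mul_one]
      rfl
  obtain ⟨y, hy, h⟩ := hmem
  exact ⟨⟨y, hy⟩, h⟩

/-- `𝔠^σ_𝕏` consists of the `g ∈ Q^h(R)` with `σ(gR) ⊆ K[x₀]`. -/
lemma mem_complementaryModule_iff (hτ : X.IsTraceForm σ τ) {g : X.Q} : g ∈ X.complementaryModule σ ↔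
    ∀ (f : X.R), ∀ i < 0, τ (X.coeff i (g * X.iota f)) = 0 := by
  constructor
  · rintro ⟨φ, hφ⟩ f i hi
    refine trace_eq_zero_of_algebraMap_eq_zero ?_
    have h1 : (σ (g * X.iota f) : X.Q) = X.iota (φ f : X.R) := hφ f
    have h2 := X.coeff_iota_mem i (φ f : X.R)
    rw [X.Fil_of_neg hi, Submodule.mem_bot] at h2
    rw [← hτ.coeff_trace, h1, h2]
  · intro h
    choose y hy using fun f => hτ.exists_mem_Kx0 (h f)
    refine ⟨⟨⟨y, fun f f' => ?_⟩, fun k f => ?_⟩, fun f => (hy f).symm⟩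
    · refine Subtype.ext (X.iota_injective ?_)
      rw [hy, map_add, mul_add, map_add]
      simp only [AddMemClass.coe_add, map_add, hy]
    · refine Subtype.ext (X.iota_injective ?_)
      change X.iota (y ((k : X.R) * f)) = X.iota ((k : X.R) * y f)
      rw [hy, map_mul X.iota, map_mul X.iota, hy, ← X.coe_map_mul_of_mem_L0 σ (X.iota_mem_L0 k)]
      congr 2
      ring

lemma one_mem_complementaryModule (hτ : X.IsTraceForm σ τ) : (1 : X.Q) ∈ X.complementaryModule σ := by
  rw [hτ.mem_complementaryModule_iff]
  intro f i hi
  have h := X.coeff_iota_mem i f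
  rw [X.Fil_of_neg hi, Submodule.mem_bot] at h
  rw [one_mul, h, map_zero]

lemma mono_mem_complementaryModule (hτ : X.IsTraceForm σ τ) {a : ∀ p : X.Supp, X.localRing p}
    (ha : a ∈ (traceBilin τ).orthogonal (X.Fil (X.reg - 1))) :
    X.mono (-X.reg) a ∈ X.complementaryModule σ := by
  rw [hτ.mem_complementaryModule_iff]
  intro f i hi
  rw [coeff_mono_mul, mul_comm]
  exact ha _ (X.Fil_mono (by omega) (X.coeff_iota_mem _ f))

lemma coeff_eq_zero_of_mem_complementaryModule (hτ : X.IsTraceForm σ τ) {g : X.Q} (hg : g ∈ X.complementaryModule σ)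
    {i : ℤ} (hi : i < -X.reg) : X.coeff i g = 0 := by
  refine hτ.eq_zero _ fun b => ?_
  have hb : b ∈ X.Fil X.reg := by rw [X.Fil_eq_top le_rfl]; exact Submodule.mem_top
  obtain ⟨f, hf⟩ := X.mem_Fil.1 hb
  have := hτ.mem_complementaryModule_iff.1 hg f (i + X.reg) (by omega)
  rwa [hf, mul_comm, coeff_mono_mul, add_sub_cancel_right, mul_comm] at this

lemma coeff_neg_reg_mem (hτ : X.IsTraceForm σ τ) {g : X.Q} (hg : g ∈ X.complementaryModule σ) :
    X.coeff (-X.reg) g ∈ (traceBilin τ).orthogonal (X.Fil (X.reg - 1)) := by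
  intro b hb
  obtain ⟨f, hf⟩ := X.mem_Fil.1 hb
  have := hτ.mem_complementaryModule_iff.1 hg f (-1) (by omega)
  rw [hf, mul_comm, coeff_mono_mul] at this
  rwa [show (-1 : ℤ) - (X.reg - 1) = -X.reg by ring] at this

end IsTraceForm

end ZeroDimScheme

namespace ZeroDimScheme

variable {K : Type u} [Field K] {n : ℕ} (X : ZeroDimScheme K n)

/-! ### The Cayley–Bacharach property -/

lemma exists_mul_mem_socle (p : X.Supp) {a : X.localRing p} (ha : a ≠ 0) :
    ∃ c, c * a ≠ 0 ∧ ∀ b ∈ IsLocalRing.maximalIdeal (X.localRing p), b * (c * a) = 0 := by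
  classical
  have : IsArtinianRing (X.localRing p) := IsArtinianRing.of_finite K _
  have hex : ∃ k, ∀ y ∈ IsLocalRing.maximalIdeal (X.localRing p) ^ k, y * a = 0 := by
    obtain ⟨k, hk⟩ := IsArtinianRing.isNilpotent_jacobson_bot (R := X.localRing p)
    rw [IsLocalRing.jacobson_eq_maximalIdeal ⊥ bot_ne_top] at hk
    refine ⟨k, fun y hy => ?_⟩
    rw [hk] at hy
    rw [(Submodule.mem_bot _).1 hy, zero_mul]
  obtain ⟨k, hk⟩ : ∃ k, Nat.find hex = k + 1 := by
    refine Nat.exists_eq_succ_of_ne_zero fun h0 => ha ?_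
    have := Nat.find_spec hex 1
    rw [h0] at this
    simpa using this
  have hlt := Nat.find_min hex (m := k) (by omega)
  push Not at hlt
  obtain ⟨c, hc, hca⟩ := hlt
  refine ⟨c, hca, fun b hb => ?_⟩
  rw [← mul_assoc]
  refine Nat.find_spec hex _ ?_
  rw [hk, pow_succ']
  exact Ideal.mul_mem_mul hb hc

instance (p : X.Supp) : Module.Finite K (X.residueField p) :=
  Module.Finite.of_surjective (IsScalarTower.toAlgHom K (X.localRing p) _).toLinearMap
    IsLocalRing.residue_surjective

lemma finrank_quotient_span_socle (p : X.Supp) {s : X.localRing p} (hs : s ≠ 0)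
    (hm : ∀ b ∈ IsLocalRing.maximalIdeal (X.localRing p), b * s = 0) :
    Module.finrank K (X.localRing p ⧸ Ideal.span {s}) + Module.finrank K (X.residueField p) =
      Module.finrank K (X.localRing p) := by
  let f : X.localRing p →ₗ[K] X.localRing p ⧸ Ideal.span {s} :=
    (Ideal.Quotient.mkₐ K (Ideal.span {s})).toLinearMap
  let g : X.localRing p →ₗ[K] X.residueField p :=
    (IsScalarTower.toAlgHom K (X.localRing p) (X.residueField p)).toLinearMap
  let h : X.localRing p →ₗ[K] X.localRing p := LinearMap.mulRight K s
  have hf := f.finrank_range_add_finrank_ker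
  have hg := g.finrank_range_add_finrank_ker
  have hh := h.finrank_range_add_finrank_ker
  rw [LinearMap.range_eq_top.2 Ideal.Quotient.mk_surjective, finrank_top] at hf
  rw [LinearMap.range_eq_top.2 IsLocalRing.residue_surjective, finrank_top] at hg
  have hfh : LinearMap.ker f = LinearMap.range h := by
    ext x
    change Ideal.Quotient.mk (Ideal.span {s}) x = 0 ↔ ∃ y, y * s = x
    rw [Ideal.Quotient.eq_zero_iff_mem, Ideal.mem_span_singleton']
  have hgh : LinearMap.ker g = LinearMap.ker h := by
    ext x
    change IsLocalRing.residue _ x = 0 ↔ x * s = 0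
    rw [IsLocalRing.residue_eq_zero_iff]
    refine ⟨hm x, fun hx => ?_⟩
    rw [IsLocalRing.mem_maximalIdeal, mem_nonunits_iff]
    exact fun hu => hs (hu.mul_right_eq_zero.1 hx)
  rw [hfh] at hf
  rw [hgh] at hg
  omega

lemma exists_isResidueBasis (p : X.Supp) : ∃ e, X.IsResidueBasis p e := by
  let b := Module.finBasis K (X.residueField p)
  choose e he using fun k => IsLocalRing.residue_surjective (b k)
  exact ⟨e, b, he⟩

/-- A nonzero socle element defines a maximal `p`-subscheme. -/
lemma exists_isMaximalSubscheme (p : X.Supp) {s : X.localRing p} (hs : s ≠ 0)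
    (hm : ∀ b ∈ IsLocalRing.maximalIdeal (X.localRing p), b * s = 0) :
    ∃ 𝔟, X.IsMaximalSubscheme p 𝔟 ∧ X.IsSocleElementOf p 𝔟 s := by
  classical
  let 𝔟 : Ideal X.affineRing := Ideal.span {X.localEquiv.symm (Pi.single p s)}
  have hmap : ∀ q, 𝔟.map (algebraMap X.affineRing (X.localRing q)) =
      Ideal.span {(Pi.single p s : ∀ q : X.Supp, X.localRing q) q} := by
    intro q
    rw [Ideal.map_span, Set.image_singleton, ← localEquiv_apply, AlgEquiv.apply_symm_apply]
  have hp : 𝔟.map (algebraMap X.affineRing (X.localRing p)) = Ideal.span {s} := by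
    rw [hmap, Pi.single_eq_same]
  have hq : ∀ q, q ≠ p → 𝔟.map (algebraMap X.affineRing (X.localRing q)) = ⊥ := by
    intro q hq
    rw [hmap, Pi.single_eq_of_ne hq, Ideal.span_singleton_eq_bot]
  refine ⟨𝔟, ⟨hq, ?_⟩, hs, hm, hp⟩
  have := Fintype.ofFinite X.Supp
  rw [subDeg, deg, finsum_eq_sum_of_fintype, finsum_eq_sum_of_fintype,
    ← Finset.add_sum_erase _ _ (Finset.mem_univ p), ← Finset.add_sum_erase _ _ (Finset.mem_univ p),
    ← X.finrank_quotient_span_socle p hs hm, add_right_comm]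
  congr 1
  · exact congrArg (· + _) (Ideal.quotientEquivAlgOfEq K hp).toLinearEquiv.finrank_eq
  · refine Finset.sum_congr rfl fun q hqp => ?_
    exact ((Ideal.quotientEquivAlgOfEq K (hq q (Finset.ne_of_mem_erase hqp))).trans
      (AlgEquiv.quotientBot K (X.localRing q))).toLinearEquiv.finrank_eq

open Classical in
lemma mu_le {p : X.Supp} {a : X.localRing p} {i : ℕ} (h : Pi.single p a ∈ X.Fil i) :
    X.mu p a ≤ i := Nat.sInf_le h

open Classical in
lemma single_mem_Fil_mu (p : X.Supp) (a : X.localRing p) : Pi.single p a ∈ X.Fil (X.mu p a) := by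
  have hne : {i : ℕ | X.mono i (Pi.single p a) ∈ Set.range X.iota}.Nonempty :=
    ⟨X.reg, X.mem_Fil.1 (by rw [X.Fil_eq_top le_rfl]; exact Submodule.mem_top)⟩
  exact Nat.sInf_mem hne

/-- A scheme is a Cayley–Bacharach scheme if and only if no nonzero ideal of the ring of global
sections is contained in the filtration step of degree `r_𝕏 - 1`. -/
lemma cayleyBacharach_iff :
    X.CayleyBacharach ↔
      ∀ a : ∀ p : X.Supp, X.localRing p, (∀ b, b * a ∈ X.Fil (X.reg - 1)) → a = 0 := by
  classical
  constructor
  · intro hCB a ha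
    by_contra hne
    obtain ⟨p, hp⟩ : ∃ p, a p ≠ 0 := Function.ne_iff.1 hne
    obtain ⟨c, hc, hm⟩ := X.exists_mul_mem_socle p hp
    obtain ⟨𝔟, h𝔟, hs⟩ := X.exists_isMaximalSubscheme p hc hm
    obtain ⟨e, he⟩ := X.exists_isResidueBasis p
    rcases Nat.eq_zero_or_pos X.reg with h0 | hpos
    · have := ha 1
      rw [X.Fil_of_neg (by omega), Submodule.mem_bot, one_mul] at this
      exact hne this
    · have hmu : ∀ k, X.mu p (e k * (c * a p)) ≤ X.reg - 1 := by
        intro k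
        refine X.mu_le ?_
        have h := ha (Pi.single p (e k * c))
        rw [← Pi.single_mul_left, mul_assoc] at h
        rw [Nat.cast_sub hpos, Nat.cast_one]
        convert h
      have h1 : X.pointDeg p ≤ Finset.univ.sup fun k => X.mu p (e k * (c * a p)) :=
        Nat.sInf_le ⟨𝔟, h𝔟, _, hs, e, he, rfl⟩
      have h2 := h1.trans (Finset.sup_le fun k _ => hmu k)
      have h3 := hCB p
      omega
  · intro h p
    by_contra hlt
    push Not at hlt
    obtain ⟨c, hc, hm⟩ := X.exists_mul_mem_socle p (one_ne_zero (α := X.localRing p))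
    obtain ⟨𝔟, h𝔟, hs⟩ := X.exists_isMaximalSubscheme p hc hm
    obtain ⟨e, he⟩ := X.exists_isResidueBasis p
    obtain ⟨𝔟', -, s, ⟨hs0, hsm, -⟩, e', ⟨b, hb⟩, hmax⟩ := Nat.sInf_mem
      (s := {m : ℕ | ∃ 𝔟, X.IsMaximalSubscheme p 𝔟 ∧ X.IsMaxSeparatorDegree p 𝔟 m})
      ⟨_, 𝔟, h𝔟, _, hs, e, he, rfl⟩
    have hmem : ∀ k, Pi.single p (e' k * s) ∈ X.Fil (X.reg - 1) := by
      intro k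
      have h1 : X.mu p (e' k * s) ≤ X.pointDeg p := by
        refine le_trans ?_ hmax.ge
        exact Finset.le_sup (f := fun k => X.mu p (e' k * s)) (Finset.mem_univ k)
      have h2 : (X.mu p (e' k * s) : ℤ) ≤ X.reg - 1 := by omega
      convert X.Fil_mono h2 (X.single_mem_Fil_mu p (e' k * s))
    have hall : ∀ y : X.localRing p, Pi.single p (y * s) ∈ X.Fil (X.reg - 1) := by
      intro y
      have hy : y * s = ∑ k, b.repr (IsLocalRing.residue _ y) k • (e' k * s) := by
        have hres : IsLocalRing.residue (X.localRing p)
            (y - ∑ k, b.repr (IsLocalRing.residue _ y) k • e' k) = 0 := by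
          rw [map_sub, sub_eq_zero, map_sum]
          conv_lhs => rw [← b.sum_repr (IsLocalRing.residue _ y)]
          refine Finset.sum_congr rfl fun k _ => ?_
          rw [← hb k, Algebra.smul_def, Algebra.smul_def, map_mul]
          rfl
        have h0 := hsm _ ((IsLocalRing.residue_eq_zero_iff _).1 hres)
        rw [sub_mul, sub_eq_zero, Finset.sum_mul] at h0
        simpa only [smul_mul_assoc] using h0
      have hsum : Pi.single p (y * s) = ∑ k, b.repr (IsLocalRing.residue _ y) k •
          (Pi.single p (e' k * s) : ∀ q : X.Supp, X.localRing q) := by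
        rw [hy, ← LinearMap.single_apply (R := K), map_sum]
        exact Finset.sum_congr rfl fun k _ => map_smul _ _ _
      rw [hsum]
      exact Submodule.sum_mem _ fun k _ => Submodule.smul_mem _ _ (hmem k)
    have hz := h (Pi.single p s) fun b => by
      rw [← Pi.single_mul_right]
      exact hall _
    exact hs0 (by simpa using congrFun hz p)

end ZeroDimScheme

namespace ZeroDimScheme

variable {K : Type u} [Field K] {n : ℕ} {X : ZeroDimScheme K n}
  {σ : X.Q →ₗ[X.L0] X.L0} {τ : (∀ p : X.Supp, X.localRing p) →ₗ[K] K}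

/-! ### The trace of the complementary module -/

lemma mul_mem_image_traceIdeal {f g : X.Q} (hf : f ∈ X.different σ)
    (hg : g ∈ X.complementaryModule σ) : f * g ∈ X.iota '' (X.traceIdeal σ : Set X.R) := by
  choose y hy using fun c : X.complementaryModule σ => hf c c.2
  let φ : X.complementaryModule σ →ₗ[X.R] X.R :=
    { toFun := y
      map_add' := fun c d => X.iota_injective (by
        rw [hy, map_add, hy, hy]
        exact mul_add _ _ _)
      map_smul' := fun r c => X.iota_injective (by
        rw [hy, RingHom.id_apply, smul_eq_mul, map_mul, hy]
        exact mul_left_comm _ _ _) }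
  refine ⟨y ⟨g, hg⟩, ?_, hy _⟩
  exact Submodule.mem_iSup_of_mem φ ⟨⟨g, hg⟩, rfl⟩

lemma mem_conductor_of_coeff_eq_zero {q : X.Q} (h : ∀ i < (X.reg : ℤ), X.coeff i q = 0) :
    q ∈ X.conductor := by
  refine ⟨X.mem_Rtilde_iff.2 fun i hi => h i (by omega), fun g hg => ?_⟩
  refine X.mem_range_iota_of_coeff_eq_zero fun i hi => ?_
  exact X.coeff_mul_eq_zero h (X.mem_Rtilde_iff.1 hg) i (by omega)

lemma CayleyBacharach.coeff_eq_zero (hCB : X.CayleyBacharach) {q : X.Q} (hq : q ∈ X.conductor) :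
    ∀ i < (X.reg : ℤ), X.coeff i q = 0 := by
  intro i hi
  refine X.cayleyBacharach_iff.1 hCB _ fun b => X.Fil_mono (show i ≤ X.reg - 1 by omega) ?_
  have hb : X.mono 0 b ∈ X.Rtilde :=
    X.mem_Rtilde_iff.2 fun j hj => X.coeff_mono_of_ne hj.ne b
  have := X.mem_range_iota_iff.1 (hq.2 _ hb) i
  rwa [mul_comm, coeff_mono_mul, sub_zero] at this

namespace IsTraceForm

/-- Every homomorphism from the complementary module to `R` is the multiplication by an element of
the different. -/
lemma iota_apply_eq_mul (hτ : X.IsTraceForm σ τ) (φ : X.complementaryModule σ →ₗ[X.R] X.R)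
    (c : X.complementaryModule σ) :
    X.iota (φ c) = X.iota (φ ⟨1, hτ.one_mem_complementaryModule⟩) * c := by
  have h1 : ∀ i < (2 * X.reg : ℤ), X.coeff i (X.mono (2 * X.reg) 1) = 0 :=
    fun i hi => X.coeff_mono_of_ne hi.ne 1
  obtain ⟨x, hx⟩ := X.mem_range_iota_of_coeff_eq_zero fun i hi => h1 i (by omega)
  obtain ⟨y, hy⟩ := X.mem_range_iota_of_coeff_eq_zero fun i hi =>
    X.coeff_mul_eq_zero h1 (fun _ => hτ.coeff_eq_zero_of_mem_complementaryModule c.2) i (by omega)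
  have hxy : x • c = y • (⟨1, hτ.one_mem_complementaryModule⟩ : X.complementaryModule σ) := by
    refine Subtype.ext ?_
    change X.iota x * c = X.iota y * 1
    rw [hx, hy, mul_one]
  have hφ := congrArg (fun z => X.mono (-(2 * X.reg)) 1 * X.iota (φ z)) hxy
  simp only [map_smul, smul_eq_mul, map_mul, hx, hy] at hφ
  have hinv : X.mono (-(2 * X.reg)) 1 * X.mono (2 * X.reg) 1 = 1 := by
    rw [mono_mul, neg_add_cancel, mul_one, mono_one]
  rw [← mul_assoc, hinv, one_mul, ← mul_assoc, ← mul_assoc, hinv, one_mul] at hφ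
  rw [hφ, mul_comm]

lemma exists_mem_different (hτ : X.IsTraceForm σ τ) (φ : X.complementaryModule σ →ₗ[X.R] X.R) :
    ∃ f ∈ X.different σ, ∀ c, X.iota (φ c) = f * c :=
  ⟨_, fun g hg => ⟨φ ⟨g, hg⟩, hτ.iota_apply_eq_mul φ ⟨g, hg⟩⟩, hτ.iota_apply_eq_mul φ⟩

lemma mem_different_of_coeff_eq_zero (hτ : X.IsTraceForm σ τ) {q : X.Q}
    (h : ∀ i < (2 * X.reg : ℤ), X.coeff i q = 0) : q ∈ X.different σ := fun g hg =>
  X.mem_range_iota_of_coeff_eq_zero fun i hi =>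
    X.coeff_mul_eq_zero h (fun _ => hτ.coeff_eq_zero_of_mem_complementaryModule hg) i (by omega)

lemma coeff_eq_zero_of_mem_traceIdeal (hτ : X.IsTraceForm σ τ)
    (hδ : ∀ f ∈ X.different σ, ∀ i < (2 * X.reg : ℤ), X.coeff i f = 0) {f : X.R}
    (hf : f ∈ X.traceIdeal σ) : ∀ i < (X.reg : ℤ), X.coeff i (X.iota f) = 0 := by
  intro i hi
  induction hf using Submodule.iSup_induction' with
  | mem φ f hf =>
    obtain ⟨c, rfl⟩ := hf
    obtain ⟨d, hd, h⟩ := hτ.exists_mem_different φ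
    rw [h]
    exact X.coeff_mul_eq_zero (hδ d hd)
      (fun _ => hτ.coeff_eq_zero_of_mem_complementaryModule c.2) i (by omega)
  | zero => rw [map_zero, map_zero]
  | add f g _ _ hf hg => rw [map_add, map_add, hf, hg, add_zero]

/-! ### Schemes with the Cayley–Bacharach property -/

lemma mem_Fil_of_orthogonal (hτ : X.IsTraceForm σ τ) {a : ∀ p : X.Supp, X.localRing p}
    (h : ∀ g ∈ (traceBilin τ).orthogonal (X.Fil (X.reg - 1)), τ (g * a) = 0) :
    a ∈ X.Fil (X.reg - 1) := by
  rw [← hτ.orthogonal_orthogonal (X.Fil (X.reg - 1))]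
  exact h

lemma eq_zero_of_mul_eq_zero (hτ : X.IsTraceForm σ τ) (hCB : X.CayleyBacharach)
    {a : ∀ p : X.Supp, X.localRing p}
    (h : ∀ g ∈ (traceBilin τ).orthogonal (X.Fil (X.reg - 1)), g * a = 0) : a = 0 := by
  refine X.cayleyBacharach_iff.1 hCB a fun b => hτ.mem_Fil_of_orthogonal fun g hg => ?_
  rw [mul_left_comm, h g hg, mul_zero, map_zero]

lemma span_orthogonal_eq_top (hτ : X.IsTraceForm σ τ) (hCB : X.CayleyBacharach) :
    Ideal.span ((traceBilin τ).orthogonal (X.Fil (X.reg - 1)) :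
      Set (∀ p : X.Supp, X.localRing p)) = ⊤ := by
  by_contra hne
  set J := Ideal.span ((traceBilin τ).orthogonal (X.Fil (X.reg - 1)) :
    Set (∀ p : X.Supp, X.localRing p)) with hJ
  obtain ⟨b, hb0, hb⟩ := hτ.exists_ne_zero_of_ne_top (W := J.restrictScalars K)
    (by rwa [Ne, Submodule.restrictScalars_eq_top_iff])
  refine hb0 (X.cayleyBacharach_iff.1 hCB b fun c => hτ.mem_Fil_of_orthogonal fun g hg => ?_)
  rw [← mul_assoc, mul_comm g]
  exact hb _ (J.mul_mem_left c (Ideal.subset_span hg))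

lemma conductor_subset (hτ : X.IsTraceForm σ τ) (hCB : X.CayleyBacharach) :
    X.conductor ⊆ X.iota '' (X.traceIdeal σ : Set X.R) := by
  intro q hq
  have hcoeff := hCB.coeff_eq_zero hq
  let S : Submodule K X.Q := ((X.traceIdeal σ).restrictScalars K).map X.iota.toLinearMap
  change q ∈ S
  obtain ⟨s, hs⟩ := X.exists_eq_sum_mono q
  rw [hs]
  refine Submodule.sum_mem _ fun i _ => ?_
  rcases lt_or_ge i (X.reg : ℤ) with hi | hi
  · rw [hcoeff i hi, mono_zero]
    exact Submodule.zero_mem _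
  · have hall : ∀ a ∈ Ideal.span ((traceBilin τ).orthogonal (X.Fil (X.reg - 1)) :
        Set (∀ p : X.Supp, X.localRing p)), ∀ c, X.mono i (c * a) ∈ S := by
      intro a ha
      induction ha using Submodule.span_induction with
      | mem g hg =>
        intro c
        have hmul : X.mono i (c * g) = X.mono (i + X.reg) c * X.mono (-X.reg) g := by
          rw [mono_mul, add_neg_cancel_right]
        rw [hmul]
        exact mul_mem_image_traceIdeal (hτ.mem_different_of_coeff_eq_zero fun j hj =>
          X.coeff_mono_of_ne (by omega) c) (hτ.mono_mem_complementaryModule hg)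
      | zero =>
        intro c
        rw [mul_zero, mono_zero]
        exact Submodule.zero_mem _
      | add a b _ _ ha hb =>
        intro c
        rw [mul_add, ← mono_add]
        exact Submodule.add_mem _ (ha c) (hb c)
      | smul d a _ ha =>
        intro c
        rw [smul_eq_mul, ← mul_assoc]
        exact ha (c * d)
    have := hall 1 (by rw [hτ.span_orthogonal_eq_top hCB]; exact Submodule.mem_top) (X.coeff i q)
    rwa [mul_one] at this

lemma minimalDedekindDifferent_iff (hτ : X.IsTraceForm σ τ) : X.MinimalDedekindDifferent σ ↔
    ∀ f ∈ X.different σ, ∀ i < (2 * X.reg : ℤ), X.coeff i f = 0 := by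
  have h : ∀ q, q ∈ X.iota '' ((⨆ (i : ℕ) (_ : 2 * X.reg ≤ i), X.Rdeg i : Submodule K X.R) :
      Set X.R) ↔ ∀ i < (2 * X.reg : ℤ), X.coeff i q = 0 := fun q => by
    rw [X.mem_iota_image_iSup_Rdeg_iff (by omega)]
    push_cast
    rfl
  constructor
  · intro hmin f hf
    rw [← h, ← hmin]
    exact hf
  · intro hδ
    exact Set.ext fun q => ⟨fun hq => (h q).2 (hδ q hq),
      fun hq => hτ.mem_different_of_coeff_eq_zero ((h q).1 hq)⟩

lemma cayleyBacharach_of_minimal (hτ : X.IsTraceForm σ τ)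
    (hδ : ∀ f ∈ X.different σ, ∀ i < (2 * X.reg : ℤ), X.coeff i f = 0) : X.CayleyBacharach := by
  refine X.cayleyBacharach_iff.2 fun a ha => ?_
  have hmem : X.mono (2 * X.reg - 1) a ∈ X.different σ := by
    refine fun g hg => X.mem_range_iota_of_coeff_eq_zero fun i hi => ?_
    rw [coeff_mono_mul]
    rcases lt_or_ge (i - (2 * X.reg - 1)) (-X.reg : ℤ) with hlt | hge
    · rw [hτ.coeff_eq_zero_of_mem_complementaryModule hg hlt, mul_zero]
    · rw [show i - (2 * X.reg - 1) = (-X.reg : ℤ) by omega]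
      refine hτ.eq_zero _ fun b => ?_
      rw [mul_comm, ← mul_assoc]
      exact hτ.coeff_neg_reg_mem hg _ (ha b)
  have := hδ _ hmem (2 * X.reg - 1) (by omega)
  rwa [coeff_mono_self] at this

end IsTraceForm

end ZeroDimScheme

end

theorem dedekind_CB_stmt14 {K : Type u} [Field K] {n : ℕ} (X : ZeroDimScheme K n)
    (hX : X.LocallyGorenstein) (σ : X.Q →ₗ[X.L0] X.L0) (hσ : X.IsHomogeneousTraceMap σ) :
    (X.CayleyBacharach → X.conductor ⊆ X.iota '' (X.traceIdeal σ : Set X.R)) ∧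
    ((X.CayleyBacharach ∧ X.conductor = X.iota '' (X.traceIdeal σ : Set X.R)) ↔
      X.MinimalDedekindDifferent σ) := by
  obtain ⟨τ, hτ⟩ := hσ.exists_isTraceForm
  refine ⟨hτ.conductor_subset, ?_⟩
  rw [hτ.minimalDedekindDifferent_iff]
  constructor
  · rintro ⟨hCB, heq⟩ f hf i hi
    refine hτ.eq_zero_of_mul_eq_zero hCB fun g hg => ?_
    have hmem := ZeroDimScheme.mul_mem_image_traceIdeal hf (hτ.mono_mem_complementaryModule hg)
    rw [← heq, mul_comm] at hmem
    have := hCB.coeff_eq_zero hmem (i - X.reg) (by omega)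
    rwa [X.coeff_mono_mul, sub_neg_eq_add, sub_add_cancel] at this
  · intro hδ
    have hCB := hτ.cayleyBacharach_of_minimal hδ
    refine ⟨hCB, (hτ.conductor_subset hCB).antisymm ?_⟩
    rintro _ ⟨f, hf, rfl⟩
    exact ZeroDimScheme.mem_conductor_of_coeff_eq_zero (hτ.coeff_eq_zero_of_mem_traceIdeal hδ hf)
end
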